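/- arXiv:2201.12034 — 11 statements merged into one kernel-verified Lean document; each statement's English description precedes it below -/
import Mathlib

section
/- Let G be a connected finite simple graph with at least one edge, let A be its adjacency matrix, let x be a strictly positive vector with A x = λ x (for some real λ) and Σ_{v} x_v² = 1, and let S be an independent set of G (no two vertices of S are adjacent). Then Σ_{i ∈ S} x_i² ≤ 1/2. -/
open Finset Matrix

/-! Let `M` be symmetric with nonnegative entries, vanishing on `S × S`, and let `M x = μ x` with
`x ≥ 0`, `μ > 0`. Pairing `M x` with `x` on `S` gives `μ ∑_{S} x²`; since `M` vanishes on `S × S`,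
this is the sum of the terms `x i * M i j * x j` across the cut between `S` and `Sᶜ`. Pairing on
`Sᶜ` gives `μ ∑_{Sᶜ} x²`, which is the same cut sum, by symmetry, plus the nonnegative terms inside
`Sᶜ`. Hence `S` carries no more mass than its complement. For the
adjacency matrix and `x > 0`, an edge `u v` forces `μ > 0`, since `μ x u = (M x) u ≥ x v > 0`. -/

section Matrix

variable {V R : Type*} [Fintype V]

section OrderedSemiring

variable [CommSemiring R] [PartialOrder R] [IsOrderedRing R] {M : Matrix V V R} {x : V → R}

theorem sum_mul_mulVec_le_sum_compl_mul_mulVec [DecidableEq V] (hsymm : M.IsSymm)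
    (hM : ∀ i j, 0 ≤ M i j) (hx : ∀ i, 0 ≤ x i) {S : Finset V}
    (hS : ∀ i ∈ S, ∀ j ∈ S, M i j = 0) :
    ∑ i ∈ S, x i * (M *ᵥ x) i ≤ ∑ i ∈ Sᶜ, x i * (M *ᵥ x) i := by
  have row_sum_compl_eq_row_sum : ∀ i ∈ S, ∑ j ∈ Sᶜ, M i j * x j = ∑ j, M i j * x j := fun i hi ↦
    sum_subset (subset_univ _) fun j _ hj ↦ by simp [hS i hi j (by simpa using hj)]
  calc ∑ i ∈ S, x i * (M *ᵥ x) i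
      = ∑ i ∈ S, ∑ j ∈ Sᶜ, x i * (M i j * x j) :=
        sum_congr rfl fun i hi ↦ by rw [← mul_sum, row_sum_compl_eq_row_sum i hi]; rfl
    _ = ∑ j ∈ Sᶜ, x j * ∑ i ∈ S, M j i * x i := by
        rw [sum_comm]
        simp only [mul_sum, hsymm.apply, mul_left_comm, mul_comm]
    _ ≤ ∑ j ∈ Sᶜ, x j * (M *ᵥ x) j :=
        sum_le_sum fun j _ ↦ mul_le_mul_of_nonneg_left
          (sum_le_univ_sum_of_nonneg fun i ↦ mul_nonneg (hM j i) (hx i)) (hx j)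

end OrderedSemiring

theorem sum_mul_mulVec_of_mulVec_eq_smul [CommSemiring R] {M : Matrix V V R} {x : V → R} {μ : R}
    (heig : M *ᵥ x = μ • x) (S : Finset V) :
    ∑ i ∈ S, x i * (M *ᵥ x) i = μ * ∑ i ∈ S, x i ^ 2 := by
  simp only [heig, Pi.smul_apply, smul_eq_mul, mul_sum, sq, mul_left_comm]

section LinearOrderedSemiring

variable [CommSemiring R] [LinearOrder R] [IsStrictOrderedRing R]
  {M : Matrix V V R} {x : V → R} {μ : R}

theorem eigenvalue_pos_of_entry_pos (hM : ∀ i j, 0 ≤ M i j) (hx : ∀ i, 0 ≤ x i)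
    (heig : M *ᵥ x = μ • x) {i j : V} (hij : 0 < M i j) (hj : 0 < x j) : 0 < μ := by
  have hsum : M i j * x j ≤ (M *ᵥ x) i :=
    single_le_sum (f := fun k ↦ M i k * x k) (fun k _ ↦ mul_nonneg (hM i k) (hx k)) (mem_univ j)
  have hmul : 0 < μ * x i := by
    simpa only [heig, Pi.smul_apply, smul_eq_mul] using (mul_pos hij hj).trans_le hsum
  exact pos_of_mul_pos_left hmul (hx i)

theorem sum_sq_le_sum_compl_sq_of_mulVec_eq_smul [DecidableEq V] (hsymm : M.IsSymm)
    (hM : ∀ i j, 0 ≤ M i j) (hx : ∀ i, 0 ≤ x i) (hμ : 0 < μ) (heig : M *ᵥ x = μ • x)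
    {S : Finset V} (hS : ∀ i ∈ S, ∀ j ∈ S, M i j = 0) :
    ∑ i ∈ S, x i ^ 2 ≤ ∑ i ∈ Sᶜ, x i ^ 2 := by
  refine le_of_mul_le_mul_left ?_ hμ
  simpa only [sum_mul_mulVec_of_mulVec_eq_smul heig] using
    sum_mul_mulVec_le_sum_compl_mul_mulVec hsymm hM hx hS

end LinearOrderedSemiring

theorem independent_set_eigenvector_mass_le_half_general [Semifield R] [LinearOrder R]
    [IsStrictOrderedRing R] {M : Matrix V V R} (hsymm : M.IsSymm) (hM : ∀ i j, 0 ≤ M i j)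
    {x : V → R} (hx : ∀ i, 0 ≤ x i) {μ : R} (hμ : 0 < μ) (heig : M *ᵥ x = μ • x)
    {S : Finset V} (hS : ∀ i ∈ S, ∀ j ∈ S, M i j = 0) :
    ∑ i ∈ S, x i ^ 2 ≤ (∑ i, x i ^ 2) / 2 := by
  classical
  rw [le_div_iff₀ two_pos, mul_two, ← sum_add_sum_compl S]
  exact add_le_add_right (sum_sq_le_sum_compl_sq_of_mulVec_eq_smul hsymm hM hx hμ heig hS) _

end Matrix

section Graph

variable {V R : Type*} (G : SimpleGraph V) [DecidableRel G.Adj]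

theorem adjMatrix_apply_nonneg [Zero R] [One R] [Preorder R] [ZeroLEOneClass R] (u v : V) :
    0 ≤ G.adjMatrix R u v := by
  rw [SimpleGraph.adjMatrix_apply]
  split_ifs
  exacts [zero_le_one, le_rfl]

variable {G}

theorem adjMatrix_eigenvalue_pos [Fintype V] [CommSemiring R] [LinearOrder R]
    [IsStrictOrderedRing R] (hedge : G.edgeSet.Nonempty) {x : V → R} (hx : ∀ v, 0 < x v) {μ : R}
    (heig : G.adjMatrix R *ᵥ x = μ • x) : 0 < μ := by
  obtain ⟨⟨u, v⟩, huv : G.Adj u v⟩ := hedge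
  exact eigenvalue_pos_of_entry_pos (adjMatrix_apply_nonneg G) (fun w ↦ (hx w).le) heig
    (by simp [huv] : 0 < G.adjMatrix R u v) (hx v)

end Graph

/-- Cioabă–Gregory. If `S` is an independent set of a connected finite
simple graph `G` with at least one edge and `x` is a strictly positive, `ℓ²`-normalized
eigenvector of the adjacency matrix of `G`, then `∑ i ∈ S, x i ² ≤ 1/2`. -/
theorem independent_set_eigenvector_mass_le_half
    {V : Type*} [Fintype V] [DecidableEq V]
    (G : SimpleGraph V) [DecidableRel G.Adj]
    (hconn : G.Connected) (hedge : G.edgeSet.Nonempty)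
    (lam : ℝ) (x : V → ℝ) (hx : ∀ v, 0 < x v)
    (heig : G.adjMatrix ℝ *ᵥ x = lam • x)
    (hnorm : ∑ v, x v ^ 2 = 1)
    (S : Finset V) (hS : ∀ u ∈ S, ∀ v ∈ S, ¬ G.Adj u v) :
    ∑ i ∈ S, x i ^ 2 ≤ 1 / 2 :=
  hnorm ▸ independent_set_eigenvector_mass_le_half_general G.isSymm_adjMatrix
    (adjMatrix_apply_nonneg G) (fun v ↦ (hx v).le) (adjMatrix_eigenvalue_pos hedge hx heig) heig
    fun u hu v hv ↦ by simp [hS u hu v hv]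
end

section
/- Let G be a connected finite simple graph with at least one edge, let A be its adjacency matrix, let x be a strictly positive vector with A x = λ x (for some real λ) and Σ_{v} x_v² = 1, and let S be an independent set of G. Then Σ_{i ∈ S} x_i² = 1/2 if and only if every edge of G has exactly one endpoint in S (i.e., G is bipartite with color classes S and V ∖ S). -/
open Finset Matrix

/-!
Weight the pair `(u, v)` by `x u * A u v * x v`. By the eigenvector equation the row of `u` has
total weight `lam * x u ^ 2`, and by symmetry the rows in `S` and the rows outside `S` contribute
the same weight to the cut between `S` and its complement. Subtracting, the weight inside `Sᶜ` minus
the weight inside `S` is `lam` times the difference of the masses of `Sᶜ` and `S`. When `S` is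
independent, the two masses therefore agree exactly when no weight is left inside `Sᶜ`.
-/

section BlockForm

variable {V R : Type*}

/-- The part `∑ u ∈ S, ∑ v ∈ T, x u * A u v * x v` of the quadratic form of `A` at `x` coming from
the block with rows in `S` and columns in `T`; for an adjacency matrix, the total weight of the
ordered pairs in `S × T` that are edges, where `(u, v)` has weight `x u * x v`. -/
def blockForm [NonUnitalNonAssocSemiring R] (A : Matrix V V R) (x : V → R) (S T : Finset V) : R :=
  ∑ u ∈ S, ∑ v ∈ T, x u * A u v * x v

theorem blockForm_comm [CommSemiring R] {A : Matrix V V R} (hA : A.IsSymm) (x : V → R)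
    (S T : Finset V) : blockForm A x S T = blockForm A x T S := by
  unfold blockForm
  rw [sum_comm]
  refine sum_congr rfl fun v _ => sum_congr rfl fun u _ => ?_
  rw [hA.apply v u]
  ring

theorem blockForm_add_blockForm_compl [NonUnitalNonAssocSemiring R] [Fintype V] [DecidableEq V]
    (A : Matrix V V R) (x : V → R) (S T : Finset V) :
    blockForm A x S T + blockForm A x S Tᶜ = blockForm A x S univ := by
  simp only [blockForm, ← sum_add_distrib, sum_add_sum_compl]

theorem blockForm_univ_right_of_mulVec_eq_smul [CommSemiring R] [Fintype V] {A : Matrix V V R}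
    {x : V → R} {lam : R} (heig : A *ᵥ x = lam • x) (S : Finset V) :
    blockForm A x S univ = lam * ∑ u ∈ S, x u ^ 2 := by
  rw [blockForm, mul_sum]
  refine sum_congr rfl fun u _ => ?_
  calc ∑ v, x u * A u v * x v = x u * (A *ᵥ x) u := by
        simp only [mulVec, dotProduct, mul_sum, mul_assoc]
    _ = lam * x u ^ 2 := by
        rw [heig, Pi.smul_apply, smul_eq_mul]
        ring

theorem blockForm_compl_sub_blockForm [CommRing R] [Fintype V] [DecidableEq V] {A : Matrix V V R}
    {x : V → R} {lam : R} (hA : A.IsSymm) (heig : A *ᵥ x = lam • x) (S : Finset V) :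
    blockForm A x Sᶜ Sᶜ - blockForm A x S S = lam * (∑ u ∈ Sᶜ, x u ^ 2 - ∑ u ∈ S, x u ^ 2) := by
  have rows_S : blockForm A x S S + blockForm A x S Sᶜ = lam * ∑ u ∈ S, x u ^ 2 := by
    rw [blockForm_add_blockForm_compl, blockForm_univ_right_of_mulVec_eq_smul heig]
  have rows_compl : blockForm A x Sᶜ S + blockForm A x Sᶜ Sᶜ = lam * ∑ u ∈ Sᶜ, x u ^ 2 := by
    rw [blockForm_add_blockForm_compl, blockForm_univ_right_of_mulVec_eq_smul heig]
  linear_combination rows_compl - rows_S - blockForm_comm hA x Sᶜ S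

theorem blockForm_eq_zero_iff [Semiring R] [PartialOrder R] [IsStrictOrderedRing R]
    {A : Matrix V V R} {x : V → R} (hA : ∀ u v, 0 ≤ A u v) (hx : ∀ v, 0 < x v) {S T : Finset V} :
    blockForm A x S T = 0 ↔ ∀ u ∈ S, ∀ v ∈ T, A u v = 0 := by
  have term_nonneg (u v : V) : 0 ≤ x u * A u v * x v :=
    mul_nonneg (mul_nonneg (hx u).le (hA u v)) (hx v).le
  have term_eq_zero_iff (u v : V) : x u * A u v * x v = 0 ↔ A u v = 0 := by
    refine ⟨fun h => ?_, fun h => by rw [h, mul_zero, zero_mul]⟩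
    by_contra hne
    exact (mul_pos (mul_pos (hx u) ((hA u v).lt_of_ne' hne)) (hx v)).ne' h
  unfold blockForm
  rw [sum_eq_zero_iff_of_nonneg fun u _ => sum_nonneg fun v _ => term_nonneg u v]
  simp only [sum_eq_zero_iff_of_nonneg fun v _ => term_nonneg _ v, term_eq_zero_iff]

theorem eigenvalue_ne_zero_of_nonneg [CommSemiring R] [PartialOrder R] [IsStrictOrderedRing R]
    [Fintype V] {A : Matrix V V R} {x : V → R} {lam : R} (hA : ∀ u v, 0 ≤ A u v) (hA_ne : A ≠ 0)
    (hx : ∀ v, 0 < x v) (heig : A *ᵥ x = lam • x) : lam ≠ 0 := by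
  rintro rfl
  have form_eq_zero : blockForm A x univ univ = 0 := by
    rw [blockForm_univ_right_of_mulVec_eq_smul heig, zero_mul]
  refine hA_ne (Matrix.ext fun u v => ?_)
  exact (blockForm_eq_zero_iff hA hx).1 form_eq_zero u (mem_univ u) v (mem_univ v)

end BlockForm

section AdjMatrix

variable {V R : Type*} (G : SimpleGraph V) [DecidableRel G.Adj]

variable {G} in
theorem adjMatrix_ne_zero_of_edgeSet_nonempty [Zero R] [One R] [NeZero (1 : R)]
    (hedge : G.edgeSet.Nonempty) : G.adjMatrix R ≠ 0 := by
  obtain ⟨⟨u, v⟩, huv : G.Adj u v⟩ := hedge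
  intro h
  simpa [huv] using congrFun₂ h u v

end AdjMatrix

theorem independent_set_eigenvector_mass_eq_half_iff_general
    {V R : Type*} [Fintype V] [CommRing R] [LinearOrder R] [IsStrictOrderedRing R]
    {A : Matrix V V R} (hA_symm : A.IsSymm) (hA_nonneg : ∀ u v, 0 ≤ A u v) (hA_ne : A ≠ 0)
    {lam : R} {x : V → R} (hx : ∀ v, 0 < x v) (heig : A *ᵥ x = lam • x)
    {S : Finset V} (hS : ∀ u ∈ S, ∀ v ∈ S, A u v = 0) :
    2 * ∑ i ∈ S, x i ^ 2 = ∑ v, x v ^ 2 ↔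
      ∀ u v, A u v ≠ 0 → ((u ∈ S ∧ v ∉ S) ∨ (u ∉ S ∧ v ∈ S)) := by
  classical
  have hlam : lam ≠ 0 := eigenvalue_ne_zero_of_nonneg hA_nonneg hA_ne hx heig
  have hform : blockForm A x Sᶜ Sᶜ = lam * (∑ u ∈ Sᶜ, x u ^ 2 - ∑ u ∈ S, x u ^ 2) := by
    rw [← blockForm_compl_sub_blockForm hA_symm heig,
      (blockForm_eq_zero_iff hA_nonneg hx).2 hS, sub_zero]
  calc 2 * ∑ i ∈ S, x i ^ 2 = ∑ v, x v ^ 2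
      ↔ ∑ u ∈ Sᶜ, x u ^ 2 - ∑ u ∈ S, x u ^ 2 = 0 := by
        rw [← sum_add_sum_compl S, two_mul, add_right_inj, sub_eq_zero, eq_comm]
    _ ↔ blockForm A x Sᶜ Sᶜ = 0 := by rw [hform, mul_eq_zero_iff_left hlam]
    _ ↔ ∀ u ∈ Sᶜ, ∀ v ∈ Sᶜ, A u v = 0 := blockForm_eq_zero_iff hA_nonneg hx
    _ ↔ ∀ u v, A u v ≠ 0 → ((u ∈ S ∧ v ∉ S) ∨ (u ∉ S ∧ v ∈ S)) := by
        simp only [mem_compl]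
        grind

/-- Cioabă–Gregory, equality case. If `S` is an independent set of a
connected finite simple graph `G` with at least one edge and `x` is a strictly positive,
`ℓ²`-normalized eigenvector of the adjacency matrix of `G`, then `∑ i ∈ S, x i ² = 1/2`
if and only if every edge of `G` has exactly one endpoint in `S`, i.e. `G` is bipartite
with `S` as one color class. -/
theorem independent_set_eigenvector_mass_eq_half_iff
    {V : Type*} [Fintype V] [DecidableEq V]
    (G : SimpleGraph V) [DecidableRel G.Adj]
    (hconn : G.Connected) (hedge : G.edgeSet.Nonempty)
    (lam : ℝ) (x : V → ℝ) (hx : ∀ v, 0 < x v)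
    (heig : G.adjMatrix ℝ *ᵥ x = lam • x)
    (hnorm : ∑ v, x v ^ 2 = 1)
    (S : Finset V) (hS : ∀ u ∈ S, ∀ v ∈ S, ¬ G.Adj u v) :
    (∑ i ∈ S, x i ^ 2 = 1 / 2) ↔ (∀ u v, G.Adj u v → ((u ∈ S ∧ v ∉ S) ∨ (u ∉ S ∧ v ∈ S))) := by
  rw [eq_div_iff two_ne_zero, mul_comm, ← hnorm]
  simpa using independent_set_eigenvector_mass_eq_half_iff_general G.isSymm_adjMatrix
    (adjMatrix_apply_nonneg G) (adjMatrix_ne_zero_of_edgeSet_nonempty hedge) hx heig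
    (by simpa using hS)
end

section
/- Let k ≥ 2, let H = (V, E) be a k-uniform hypergraph with at least one edge, let (ρ, y) be a normalized positive eigenpair of H, and let S ⊆ V satisfy |e ∩ S| ≤ 1 for every edge e ∈ E. Then Σ_{i ∈ S} y_i^k ≤ 1/k. -/
open Finset

/-!
Multiplying the eigenvalue equation at `i` by `y i` gives `ρ * y i ^ p = ∑ e ∋ i, ∏ v ∈ e, y v`.
Summing over `i ∈ T` counts the weight `∏ v ∈ e, y v` of each edge `e` exactly `#(e ∩ T)` times.
For `T = V` each weight is thus counted `k` times, for an independent set `T = S` at most once,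
so the mass of `S` is at most a `1 / k` fraction of the total mass.
-/

theorem sum_sum_filter_mem_eq_sum_card_inter_nsmul {V M : Type*} [DecidableEq V] [AddCommMonoid M]
    (E : Finset (Finset V)) (T : Finset V) (w : Finset V → M) :
    ∑ i ∈ T, ∑ e ∈ E with i ∈ e, w e = ∑ e ∈ E, #(e ∩ T) • w e := by
  simp_rw [sum_filter]
  rw [sum_comm]
  refine sum_congr rfl fun e _ => ?_
  rw [← sum_filter, sum_const, filter_mem_eq_inter, inter_comm]

/-- `(ρ, y)` satisfies the eigenvalue equations of the hypergraph with edge set `E`, with exponent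
`p - 1` on the left-hand side. For a `k`-uniform hypergraph, `p = k` gives the eigenpairs of its
adjacency tensor and general `p` those of the `p`-spectral theory. The subtraction is truncated, so
the notion is only meaningful for `p ≠ 0`. -/
def IsHypergraphEigenpair {V R : Type*} [DecidableEq V] [CommSemiring R]
    (E : Finset (Finset V)) (p : ℕ) (ρ : R) (y : V → R) : Prop :=
  ∀ i, ρ * y i ^ (p - 1) = ∑ e ∈ E with i ∈ e, ∏ v ∈ e.erase i, y v

namespace IsHypergraphEigenpair

variable {V R : Type*} [DecidableEq V] {E : Finset (Finset V)} {p : ℕ} {ρ : R} {y : V → R}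

section CommSemiring

variable [CommSemiring R]

theorem mul_pow_eq_sum_prod (h : IsHypergraphEigenpair E p ρ y) (hp : p ≠ 0) (i : V) :
    ρ * y i ^ p = ∑ e ∈ E with i ∈ e, ∏ v ∈ e, y v := by
  rw [← pow_sub_one_mul hp, ← mul_assoc, h i, sum_mul]
  exact sum_congr rfl fun e he => prod_erase_mul e y (mem_filter.mp he).2

theorem mul_sum_pow_eq_sum_card_inter_mul_prod (h : IsHypergraphEigenpair E p ρ y) (hp : p ≠ 0)
    (T : Finset V) :
    ρ * ∑ i ∈ T, y i ^ p = ∑ e ∈ E, (#(e ∩ T) : R) * ∏ v ∈ e, y v := by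
  simp_rw [mul_sum, h.mul_pow_eq_sum_prod hp, sum_sum_filter_mem_eq_sum_card_inter_nsmul,
    nsmul_eq_mul]

end CommSemiring

section Ordered

variable [CommSemiring R] [LinearOrder R] [IsStrictOrderedRing R]

theorem eigenvalue_pos (h : IsHypergraphEigenpair E p ρ y) (hy : ∀ v, 0 < y v)
    (hE : ∃ e ∈ E, e.Nonempty) : 0 < ρ := by
  obtain ⟨e, he, i, hi⟩ := hE
  have hsum : 0 < ∑ e ∈ E with i ∈ e, ∏ v ∈ e.erase i, y v :=
    sum_pos (fun e _ => prod_pos fun v _ => hy v) ⟨e, mem_filter.mpr ⟨he, hi⟩⟩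
  rw [← h i] at hsum
  exact pos_of_mul_pos_left hsum (pow_pos (hy i) _).le

theorem mul_sum_pow_le_mul_sum_pow (h : IsHypergraphEigenpair E p ρ y) (hp : p ≠ 0) (hρ : 0 < ρ)
    (hy : ∀ v, 0 ≤ y v) {a b : ℕ} {S T : Finset V}
    (hST : ∀ e ∈ E, a * #(e ∩ S) ≤ b * #(e ∩ T)) :
    a * ∑ i ∈ S, y i ^ p ≤ b * ∑ i ∈ T, y i ^ p := by
  refine le_of_mul_le_mul_left ?_ hρ
  calc ρ * (a * ∑ i ∈ S, y i ^ p)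
      = ∑ e ∈ E, (a * #(e ∩ S) : R) * ∏ v ∈ e, y v := by
        simp_rw [mul_left_comm ρ, h.mul_sum_pow_eq_sum_card_inter_mul_prod hp, mul_sum, mul_assoc]
    _ ≤ ∑ e ∈ E, (b * #(e ∩ T) : R) * ∏ v ∈ e, y v := by
        refine sum_le_sum fun e he => mul_le_mul_of_nonneg_right ?_ (prod_nonneg fun v _ => hy v)
        exact_mod_cast hST e he
    _ = ρ * (b * ∑ i ∈ T, y i ^ p) := by
        simp_rw [mul_left_comm ρ, h.mul_sum_pow_eq_sum_card_inter_mul_prod hp, mul_sum, mul_assoc]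

end Ordered

end IsHypergraphEigenpair

theorem hypergraph_independent_set_mass_le_general
    {V K : Type*} [Fintype V] [DecidableEq V] [Semifield K] [LinearOrder K] [IsStrictOrderedRing K]
    {E : Finset (Finset V)} {p k t : ℕ} {ρ : K} {y : V → K} {S : Finset V}
    (hp : p ≠ 0) (hk : 0 < k) (hcard : ∀ e ∈ E, k ≤ #e)
    (h : IsHypergraphEigenpair E p ρ y) (hρ : 0 < ρ) (hy : ∀ v, 0 ≤ y v)
    (hnorm : ∑ v, y v ^ p = 1) (hS : ∀ e ∈ E, #(e ∩ S) ≤ t) :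
    ∑ i ∈ S, y i ^ p ≤ t / k := by
  have hST : ∀ e ∈ E, k * #(e ∩ S) ≤ t * #(e ∩ univ) := fun e he => by
    rw [inter_univ, mul_comm]
    exact Nat.mul_le_mul (hS e he) (hcard e he)
  have hmass : k * ∑ i ∈ S, y i ^ p ≤ t * ∑ v, y v ^ p :=
    h.mul_sum_pow_le_mul_sum_pow hp hρ hy hST
  rw [hnorm, mul_one] at hmass
  exact (le_div_iff₀' (Nat.cast_pos.mpr hk)).mpr hmass

/-- If `S` is a strongly independent set (every edge meets `S` in at most
one vertex) of a `k`-uniform hypergraph `H = (V, E)` with at least one edge, and `(ρ, y)`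
is a normalized positive eigenpair of `H`, then `∑ i ∈ S, y i ^ k ≤ 1/k`. -/
theorem hypergraph_independent_set_mass_le
    {V : Type*} [Fintype V] [DecidableEq V]
    (k : ℕ) (hk : 2 ≤ k)
    (E : Finset (Finset V)) (huniform : ∀ e ∈ E, e.card = k) (hE : E.Nonempty)
    (ρ : ℝ) (y : V → ℝ) (hy : ∀ v, 0 < y v)
    (heig : ∀ i : V, ρ * y i ^ (k - 1) =
      ∑ e ∈ E.filter (fun e => i ∈ e), ∏ v ∈ e.erase i, y v)
    (hnorm : ∑ v, y v ^ k = 1)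
    (S : Finset V) (hS : ∀ e ∈ E, (e ∩ S).card ≤ 1) :
    ∑ i ∈ S, y i ^ k ≤ 1 / k := by
  have hpair : IsHypergraphEigenpair E k ρ y := heig
  have hk0 : 0 < k := by lia
  have hρ : 0 < ρ := hpair.eigenvalue_pos hy <|
    hE.imp fun e he => ⟨he, card_pos.mp (hk0.trans_eq (huniform e he).symm)⟩
  simpa only [Nat.cast_one] using hypergraph_independent_set_mass_le_general hk0.ne' hk0
    (fun e he => (huniform e he).ge) hpair hρ (fun v => (hy v).le) hnorm hS
end

section
/- Let t ≥ 1 be an integer and let ρ, α, β, γ, δ, ε be strictly positive reals satisfying the system (BT): ρα² = β² + (t+1)δε, ρβ² = αβ + tβγ, ργ² = β², ρδ² = (t+1)αε, ρε² = αδ. Then (β > α and β > γ and β > δ and β > ε) if and only if (t+1)² < ρ³ − ρ² (equivalently, t < ρ·√(ρ−1) − 1). (This characterizes when the vertices r₁, r₂ of the t-pleated bowtie B_t have spectral rank 1, via the eigenequations of its principal eigenvector written with y(c) = α, y(r₁) = y(r₂) = β, y(r_i) = γ for i ≥ 3, y(ℓ₁) = δ, y(ℓ_j) = ε for j ≥ 2.)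 -/
/-!
Write `s = t + 1`, and call `c` the center, `ℓ₁` the hub and `ℓ_j` (`j ≥ 2`) the leaves of the left
pleat, `r₁, r₂` the spine and `r_i` (`i ≥ 3`) the tips of the right one. The hub and leaf equations
multiply to `ρ² δ ε = s α²`, whence `ρ³ δ³ = s² α³` and `ρ³ ε³ = s α³`. Substituting in the center
equation gives `ρ² β² = (ρ³ - s²) α²`, so `β > α` alone is already equivalent to `s² < ρ³ - ρ²`.
This bound forces `ρ > 1`, whence `γ < β`, and `s² < ρ³ ≤ ρ⁶`, whence `δ` and `ε` are below `α`.
-/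

section Cancellation

variable {R : Type*} [CommRing R] [NoZeroDivisors R] {s ρ α β δ ε : R}

lemma pleat_hub_mul_leaf_eq (hδ : δ ≠ 0) (hε : ε ≠ 0)
    (hub : ρ * δ ^ 2 = s * α * ε) (leaf : ρ * ε ^ 2 = α * δ) :
    ρ ^ 2 * (δ * ε) = s * α ^ 2 := by
  apply mul_right_cancel₀ (mul_ne_zero hδ hε)
  calc ρ ^ 2 * (δ * ε) * (δ * ε) = (ρ * δ ^ 2) * (ρ * ε ^ 2) := by ring
    _ = (s * α * ε) * (α * δ) := by rw [hub, leaf]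
    _ = s * α ^ 2 * (δ * ε) := by ring

lemma pleat_hub_cube_eq (hδ : δ ≠ 0) (hε : ε ≠ 0)
    (hub : ρ * δ ^ 2 = s * α * ε) (leaf : ρ * ε ^ 2 = α * δ) :
    ρ ^ 3 * δ ^ 3 = s ^ 2 * α ^ 3 :=
  calc ρ ^ 3 * δ ^ 3 = ρ ^ 2 * δ * (ρ * δ ^ 2) := by ring
    _ = s * α * (ρ ^ 2 * (δ * ε)) := by rw [hub]; ring
    _ = s ^ 2 * α ^ 3 := by rw [pleat_hub_mul_leaf_eq hδ hε hub leaf]; ring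

lemma pleat_leaf_cube_eq (hδ : δ ≠ 0) (hε : ε ≠ 0)
    (hub : ρ * δ ^ 2 = s * α * ε) (leaf : ρ * ε ^ 2 = α * δ) :
    ρ ^ 3 * ε ^ 3 = s * α ^ 3 :=
  calc ρ ^ 3 * ε ^ 3 = ρ ^ 2 * ε * (ρ * ε ^ 2) := by ring
    _ = α * (ρ ^ 2 * (δ * ε)) := by rw [leaf]; ring
    _ = s * α ^ 3 := by rw [pleat_hub_mul_leaf_eq hδ hε hub leaf]; ring

lemma spine_sq_eq_center_sq (hδ : δ ≠ 0) (hε : ε ≠ 0)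
    (center : ρ * α ^ 2 = β ^ 2 + s * δ * ε)
    (hub : ρ * δ ^ 2 = s * α * ε) (leaf : ρ * ε ^ 2 = α * δ) :
    ρ ^ 2 * β ^ 2 = (ρ ^ 3 - s ^ 2) * α ^ 2 := by
  linear_combination (-ρ ^ 2) * center - s * pleat_hub_mul_leaf_eq hδ hε hub leaf

end Cancellation

section Order

variable {R : Type*} [CommRing R] [LinearOrder R] [IsStrictOrderedRing R] {s ρ α β γ δ ε : R}

lemma lt_iff_lt_of_mul_pow_eq_mul_pow {a b x y : R} {n : ℕ} (hn : n ≠ 0) (hb : 0 < b)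
    (hx : 0 < x) (hy : 0 ≤ y) (h : a * x ^ n = b * y ^ n) : x < y ↔ b < a :=
  calc x < y ↔ x ^ n < y ^ n := (pow_lt_pow_iff_left₀ hx.le hy hn).symm
    _ ↔ b * x ^ n < b * y ^ n := (mul_lt_mul_iff_right₀ hb).symm
    _ ↔ b * x ^ n < a * x ^ n := by rw [h]
    _ ↔ b < a := mul_lt_mul_iff_left₀ (pow_pos hx n)

lemma one_lt_of_sq_lt_cube_sub_sq (h : s ^ 2 < ρ ^ 3 - ρ ^ 2) : 1 < ρ := by
  have factored : 0 < ρ ^ 2 * (ρ - 1) :=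
    calc 0 ≤ s ^ 2 := sq_nonneg s
      _ < ρ ^ 3 - ρ ^ 2 := h
      _ = ρ ^ 2 * (ρ - 1) := by ring
  exact sub_pos.mp (pos_of_mul_pos_right factored (sq_nonneg ρ))

lemma lt_of_pow_lt_of_one_le {a x : R} {n : ℕ} (hn : n ≠ 0) (ha : 1 ≤ a) (h : x ^ n < a) :
    x < a :=
  lt_of_pow_lt_pow_left₀ n (zero_le_one.trans ha) (h.trans_le (le_self_pow₀ ha hn))

lemma center_lt_spine_iff (hρ : 0 < ρ) (hα : 0 < α) (hβ : 0 ≤ β) (hδ : δ ≠ 0) (hε : ε ≠ 0)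
    (center : ρ * α ^ 2 = β ^ 2 + s * δ * ε)
    (hub : ρ * δ ^ 2 = s * α * ε) (leaf : ρ * ε ^ 2 = α * δ) :
    α < β ↔ s ^ 2 < ρ ^ 3 - ρ ^ 2 :=
  (lt_iff_lt_of_mul_pow_eq_mul_pow two_ne_zero (pow_pos hρ 2) hα hβ
    (spine_sq_eq_center_sq hδ hε center hub leaf).symm).trans lt_sub_comm

lemma pleat_hub_lt_center_iff (hs : 0 < s) (hα : 0 ≤ α) (hδ : 0 < δ) (hε : ε ≠ 0)
    (hub : ρ * δ ^ 2 = s * α * ε) (leaf : ρ * ε ^ 2 = α * δ) :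
    δ < α ↔ s ^ 2 < ρ ^ 3 :=
  lt_iff_lt_of_mul_pow_eq_mul_pow three_ne_zero (pow_pos hs 2) hδ hα
    (pleat_hub_cube_eq hδ.ne' hε hub leaf)

lemma pleat_leaf_lt_center_iff (hs : 0 < s) (hα : 0 ≤ α) (hδ : δ ≠ 0) (hε : 0 < ε)
    (hub : ρ * δ ^ 2 = s * α * ε) (leaf : ρ * ε ^ 2 = α * δ) :
    ε < α ↔ s < ρ ^ 3 :=
  lt_iff_lt_of_mul_pow_eq_mul_pow three_ne_zero hs hε hα
    (pleat_leaf_cube_eq hδ hε.ne' hub leaf)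

lemma tip_lt_spine_iff (hβ : 0 ≤ β) (hγ : 0 < γ) (tip : ρ * γ ^ 2 = β ^ 2) : γ < β ↔ 1 < ρ :=
  lt_iff_lt_of_mul_pow_eq_mul_pow two_ne_zero one_pos hγ hβ (by rw [tip, one_mul])

end Order

theorem bowtie_rank_one_iff_general {R : Type*} [CommRing R] [LinearOrder R]
    [IsStrictOrderedRing R] (s ρ α β γ δ ε : R)
    (hρ : 0 < ρ) (hα : 0 < α) (hβ : 0 < β) (hγ : 0 < γ) (hδ : 0 < δ) (hε : 0 < ε)
    (center : ρ * α ^ 2 = β ^ 2 + s * δ * ε)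
    (tip : ρ * γ ^ 2 = β ^ 2)
    (hub : ρ * δ ^ 2 = s * α * ε)
    (leaf : ρ * ε ^ 2 = α * δ) :
    (β > α ∧ β > γ ∧ β > δ ∧ β > ε) ↔ s ^ 2 < ρ ^ 3 - ρ ^ 2 := by
  have center_lt_iff := center_lt_spine_iff hρ hα hβ.le hδ.ne' hε.ne' center hub leaf
  refine ⟨fun h ↦ center_lt_iff.mp h.1, fun h ↦ ?_⟩
  have hs : 0 < s := by
    have : 0 < s * (α * ε) := by rw [← mul_assoc, ← hub]; positivity
    exact pos_of_mul_pos_left this (mul_pos hα hε).le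
  have one_lt : 1 < ρ := one_lt_of_sq_lt_cube_sub_sq h
  have sq_lt_cube : s ^ 2 < ρ ^ 3 := h.trans (sub_lt_self _ (pow_pos hρ 2))
  have center_lt : α < β := center_lt_iff.mpr h
  have hub_lt : δ < α := (pleat_hub_lt_center_iff hs hα.le hδ hε.ne' hub leaf).mpr sq_lt_cube
  have leaf_lt : ε < α := (pleat_leaf_lt_center_iff hs hα.le hδ.ne' hε hub leaf).mpr
    (lt_of_pow_lt_of_one_le two_ne_zero (one_le_pow₀ one_lt.le) sq_lt_cube)
  exact ⟨center_lt, (tip_lt_spine_iff hβ.le hγ tip).mpr one_lt, hub_lt.trans center_lt,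
    leaf_lt.trans center_lt⟩

/-- For the system (BT) of eigenequations of the t-pleated bowtie `B_t`,
the entries `β = y(r₁) = y(r₂)` are strictly largest if and only if
`(t+1)² < ρ³ − ρ²` (equivalently `t < ρ·√(ρ−1) − 1`). -/
theorem bowtie_rank_one_iff (t : ℕ) (ht : 1 ≤ t)
    (ρ α β γ δ ε : ℝ)
    (hρ : 0 < ρ) (hα : 0 < α) (hβ : 0 < β) (hγ : 0 < γ) (hδ : 0 < δ) (hε : 0 < ε)
    (h1 : ρ * α ^ 2 = β ^ 2 + (t + 1) * δ * ε)
    (h2 : ρ * β ^ 2 = α * β + t * β * γ)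
    (h3 : ρ * γ ^ 2 = β ^ 2)
    (h4 : ρ * δ ^ 2 = (t + 1) * α * ε)
    (h5 : ρ * ε ^ 2 = α * δ) :
    (β > α ∧ β > γ ∧ β > δ ∧ β > ε) ↔ ((t : ℝ) + 1) ^ 2 < ρ ^ 3 - ρ ^ 2 :=
  bowtie_rank_one_iff_general (t + 1 : ℝ) ρ α β γ δ ε hρ hα hβ hγ hδ hε h1 h3 h4 h5
end

section
/- Let t ≥ 1 be an integer and let ρ, α, β, γ, δ, ε be strictly positive reals satisfying the system (BT): ρα² = β² + (t+1)δε, ρβ² = αβ + tβγ, ργ² = β², ρδ² = (t+1)αε, ρε² = αδ. Then: (i) δ³ = (t+1)·ε³ (so δ > ε); (ii) ρ³ > (t+1)²; (iii) α²·(ρ³ − (t+1)²) = ρ²·β²; and (iv) ρ³·δ³ = (t+1)²·α³. -/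
/-!
Set `s = t + 1`. Eliminating `α` between the equations at `ℓ₁` and `ℓ_j` gives `δ³ = s ε³`, while
multiplying them gives `ρ² δ ε = s α²`. The latter eliminates `δ ε` from the equation at the centre,
leaving `α² (ρ³ - s²) = ρ² β²`, whose right-hand side is positive.
-/

/-- The eigenequations at the vertices `ℓ₁` (entry `δ`) and `ℓ_j`, `j ≥ 2` (entry `ε`), of the left
wing of the pleated bowtie, where `α` is the entry at the centre. The `t + 1` edges
`{c, ℓ₁, ℓ_j}` are counted by `s`, which is allowed to be any scalar. -/
structure LeftWingEquations {R : Type*} [CommRing R] (s ρ α δ ε : R) : Prop where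
  hub : ρ * δ ^ 2 = s * α * ε
  leaf : ρ * ε ^ 2 = α * δ

namespace LeftWingEquations

section NoZeroDivisors

variable {R : Type*} [CommRing R] [NoZeroDivisors R] {s ρ α δ ε : R}

theorem hub_ne_zero (h : LeftWingEquations s ρ α δ ε) (hρ : ρ ≠ 0) (hε : ε ≠ 0) : δ ≠ 0 :=
  right_ne_zero_of_mul (h.leaf ▸ mul_ne_zero hρ (pow_ne_zero 2 hε))

theorem hub_cube_eq (h : LeftWingEquations s ρ α δ ε) (hρ : ρ ≠ 0) : δ ^ 3 = s * ε ^ 3 := by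
  refine mul_left_cancel₀ hρ ?_
  linear_combination δ * h.hub - s * ε * h.leaf

theorem sq_mul_hub_mul_leaf_eq (h : LeftWingEquations s ρ α δ ε) (hρ : ρ ≠ 0) (hε : ε ≠ 0) :
    ρ ^ 2 * (δ * ε) = s * α ^ 2 := by
  refine mul_left_cancel₀ (mul_ne_zero (h.hub_ne_zero hρ hε) hε) ?_
  calc δ * ε * (ρ ^ 2 * (δ * ε)) = ρ * δ ^ 2 * (ρ * ε ^ 2) := by ring
    _ = s * α * ε * (α * δ) := by rw [h.hub, h.leaf]
    _ = δ * ε * (s * α ^ 2) := by ring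

theorem cube_mul_hub_cube_eq (h : LeftWingEquations s ρ α δ ε) (hρ : ρ ≠ 0) (hε : ε ≠ 0) :
    ρ ^ 3 * δ ^ 3 = s ^ 2 * α ^ 3 := by
  refine mul_left_cancel₀ hε ?_
  calc ε * (ρ ^ 3 * δ ^ 3) = ρ ^ 2 * (δ * ε) * (ρ * δ ^ 2) := by ring
    _ = s * α ^ 2 * (s * α * ε) := by rw [h.sq_mul_hub_mul_leaf_eq hρ hε, h.hub]
    _ = ε * (s ^ 2 * α ^ 3) := by ring

theorem sq_mul_cube_sub_sq_eq (h : LeftWingEquations s ρ α δ ε) (hρ : ρ ≠ 0) (hε : ε ≠ 0) {b : R}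
    (hcentre : ρ * α ^ 2 = b + s * δ * ε) : α ^ 2 * (ρ ^ 3 - s ^ 2) = ρ ^ 2 * b := by
  linear_combination ρ ^ 2 * hcentre + s * h.sq_mul_hub_mul_leaf_eq hρ hε

end NoZeroDivisors

section Ordered

variable {R : Type*} [CommRing R] [LinearOrder R] [IsStrictOrderedRing R] {s ρ α δ ε : R}

theorem leaf_lt_hub (h : LeftWingEquations s ρ α δ ε) (hs : 1 < s) (hρ : ρ ≠ 0) (hε : 0 < ε) :
    ε < δ := by
  have hcube : ε ^ 3 < δ ^ 3 := h.hub_cube_eq hρ ▸ lt_mul_of_one_lt_left (pow_pos hε 3) hs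
  exact (Odd.strictMono_pow (by decide)).lt_iff_lt.mp hcube

theorem sq_lt_cube (h : LeftWingEquations s ρ α δ ε) (hρ : ρ ≠ 0) (hε : ε ≠ 0) {b : R} (hb : 0 < b)
    (hcentre : ρ * α ^ 2 = b + s * δ * ε) : s ^ 2 < ρ ^ 3 := by
  have hpos : 0 < α ^ 2 * (ρ ^ 3 - s ^ 2) := by
    rw [h.sq_mul_cube_sub_sq_eq hρ hε hcentre]
    positivity
  exact sub_pos.mp (pos_of_mul_pos_right hpos (sq_nonneg α))

end Ordered

end LeftWingEquations

theorem bowtie_identities_general {R : Type*} [CommRing R] [LinearOrder R] [IsStrictOrderedRing R]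
    {s ρ α β δ ε : R} (hs : 1 < s) (hρ : ρ ≠ 0) (hβ : β ≠ 0) (hε : 0 < ε)
    (hcentre : ρ * α ^ 2 = β ^ 2 + s * δ * ε)
    (hhub : ρ * δ ^ 2 = s * α * ε) (hleaf : ρ * ε ^ 2 = α * δ) :
    (δ ^ 3 = s * ε ^ 3 ∧ δ > ε) ∧
    ρ ^ 3 > s ^ 2 ∧
    α ^ 2 * (ρ ^ 3 - s ^ 2) = ρ ^ 2 * β ^ 2 ∧
    ρ ^ 3 * δ ^ 3 = s ^ 2 * α ^ 3 := by
  have hwing : LeftWingEquations s ρ α δ ε := ⟨hhub, hleaf⟩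
  exact ⟨⟨hwing.hub_cube_eq hρ, hwing.leaf_lt_hub hs hρ hε⟩,
    hwing.sq_lt_cube hρ hε.ne' (sq_pos_of_ne_zero hβ) hcentre,
    hwing.sq_mul_cube_sub_sq_eq hρ hε.ne' hcentre,
    hwing.cube_mul_hub_cube_eq hρ hε.ne'⟩

/-- Algebraic identities derived from the system (BT) of eigenequations
of the t-pleated bowtie `B_t`:
(i) `δ³ = (t+1)ε³` (so `δ > ε`); (ii) `ρ³ > (t+1)²`;
(iii) `α²(ρ³ − (t+1)²) = ρ²β²`; (iv) `ρ³δ³ = (t+1)²α³`. -/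
theorem bowtie_identities (t : ℕ) (ht : 1 ≤ t)
    (ρ α β γ δ ε : ℝ)
    (hρ : 0 < ρ) (hα : 0 < α) (hβ : 0 < β) (hγ : 0 < γ) (hδ : 0 < δ) (hε : 0 < ε)
    (h1 : ρ * α ^ 2 = β ^ 2 + (t + 1) * δ * ε)
    (h2 : ρ * β ^ 2 = α * β + t * β * γ)
    (h3 : ρ * γ ^ 2 = β ^ 2)
    (h4 : ρ * δ ^ 2 = (t + 1) * α * ε)
    (h5 : ρ * ε ^ 2 = α * δ) :
    (δ ^ 3 = (t + 1) * ε ^ 3 ∧ δ > ε) ∧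
    ρ ^ 3 > ((t : ℝ) + 1) ^ 2 ∧
    α ^ 2 * (ρ ^ 3 - ((t : ℝ) + 1) ^ 2) = ρ ^ 2 * β ^ 2 ∧
    ρ ^ 3 * δ ^ 3 = ((t : ℝ) + 1) ^ 2 * α ^ 3 := by
  have hs : (1 : ℝ) < t + 1 := lt_add_of_pos_left 1 (Nat.cast_pos.mpr ht)
  exact bowtie_identities_general hs hρ.ne' hβ.ne' hε h1 h4 h5
end

section
/- Let t ≥ 1 be an integer and let λ, a, b, c, d, e be strictly positive reals satisfying the system (WT): λa = 2b + (t+1)(d+e), λb = a + (t+1)b + tc, λc = 2b, λd = (t+1)(a+e), λe = a + d. Then (a > b and a > c and a > d and a > e) if and only if 2λ > t + 2 + √(t² + 12t + 4) (equivalently, λ² − (t+2)λ − 2t > 0, i.e., t < (λ² − 2λ)/(λ + 2)). (This characterizes when the vertex c of the clique-shadow of the t-pleated bowtie B_t has spectral rank 1.) -/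
/-!
Eliminating `c` between the equations for `b` and `c` gives
`λ (a - b) = b (λ² - (t + 2) λ - 2 t)`, so `a > b` exactly when the quadratic is positive. The
equation for `b` also forces `λ > t + 1`, beyond the vertex of that parabola, so the quadratic is
positive exactly when `λ` exceeds its larger root `(t + 2 + √(t² + 12 t + 4)) / 2`. The other three
comparisons hold for every positive solution: subtracting from the equation for `a` those for `c`,
`d` and `e` writes a positive multiple of each of `a - c`, `a - d` and `a - e` as a positive
quantity.
-/

theorem sqrt_discrim_lt_iff {a b c x : ℝ} (ha : 0 < a) (hx : 0 < 2 * a * x + b) :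
    √(discrim a b c) < 2 * a * x + b ↔ 0 < a * x ^ 2 + b * x + c := by
  have complete_square :
      (2 * a * x + b) ^ 2 - discrim a b c = 4 * a * (a * x ^ 2 + b * x + c) := by
    rw [discrim]
    ring
  rw [Real.sqrt_lt' hx, ← sub_pos, complete_square, mul_pos_iff_of_pos_left (by positivity)]

/-- The system (WT): the eigenequations, for the eigenvalue `lam`, of the co-occurrence matrix of
the `t`-pleated bowtie. The eigenvector takes the value `a` at the center, `b` at `r₁` and `r₂`, `c`
at the remaining `rᵢ`, `d` at `ℓ₁` and `e` at the remaining `ℓⱼ`. The parameter `t` is a scalar, so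
that it need not be a number of pleats. -/
structure PleatedBowtieSystem {R : Type*} [CommSemiring R] (t lam a b c d e : R) : Prop where
  center : lam * a = 2 * b + (t + 1) * (d + e)
  right_hub : lam * b = a + (t + 1) * b + t * c
  right_leaf : lam * c = 2 * b
  left_hub : lam * d = (t + 1) * (a + e)
  left_leaf : lam * e = a + d

namespace PleatedBowtieSystem

variable {R : Type*} [CommRing R] {t lam a b c d e : R}

theorem mul_center_sub_right_hub (h : PleatedBowtieSystem t lam a b c d e) :
    lam * (a - b) = b * (lam ^ 2 - (t + 2) * lam - 2 * t) := by
  linear_combination -lam * h.right_hub - t * h.right_leaf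

theorem mul_center_sub_right_leaf (h : PleatedBowtieSystem t lam a b c d e) :
    lam * (a - c) = (t + 1) * (d + e) := by
  linear_combination h.center - h.right_leaf

theorem mul_center_sub_left_hub (h : PleatedBowtieSystem t lam a b c d e) :
    (lam + t + 1) * (a - d) = 2 * b := by
  linear_combination h.center - h.left_hub

theorem mul_center_sub_left_leaf (h : PleatedBowtieSystem t lam a b c d e) :
    (lam + 1) * (a - e) = 2 * b + t * (d + e) := by
  linear_combination h.center - h.left_leaf

variable [LinearOrder R] [IsStrictOrderedRing R]

theorem add_one_lt_eigenvalue (h : PleatedBowtieSystem t lam a b c d e)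
    (ht : 0 ≤ t) (ha : 0 < a) (hb : 0 < b) (hc : 0 ≤ c) : t + 1 < lam := by
  refine lt_of_mul_lt_mul_right ?_ hb.le
  linarith [h.right_hub, mul_nonneg ht hc]

theorem right_hub_lt_center_iff (h : PleatedBowtieSystem t lam a b c d e)
    (hlam : 0 < lam) (hb : 0 < b) : b < a ↔ 0 < lam ^ 2 - (t + 2) * lam - 2 * t := by
  rw [← sub_pos, ← mul_pos_iff_of_pos_left hlam, h.mul_center_sub_right_hub,
    mul_pos_iff_of_pos_left hb]

theorem right_leaf_lt_center (h : PleatedBowtieSystem t lam a b c d e)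
    (ht : 0 ≤ t) (hlam : 0 < lam) (hd : 0 < d) (he : 0 ≤ e) : c < a := by
  have : 0 < lam * (a - c) := by
    rw [h.mul_center_sub_right_leaf]
    positivity
  exact sub_pos.mp (pos_of_mul_pos_right this hlam.le)

theorem left_hub_lt_center (h : PleatedBowtieSystem t lam a b c d e)
    (ht : 0 ≤ t) (hlam : 0 ≤ lam) (hb : 0 < b) : d < a := by
  have : 0 < (lam + t + 1) * (a - d) := by
    rw [h.mul_center_sub_left_hub]
    positivity
  exact sub_pos.mp (pos_of_mul_pos_right this (by positivity))

theorem left_leaf_lt_center (h : PleatedBowtieSystem t lam a b c d e)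
    (ht : 0 ≤ t) (hlam : 0 ≤ lam) (hb : 0 < b) (hd : 0 ≤ d) (he : 0 ≤ e) : e < a := by
  have : 0 < (lam + 1) * (a - e) := by
    rw [h.mul_center_sub_left_leaf]
    positivity
  exact sub_pos.mp (pos_of_mul_pos_right this (by positivity))

end PleatedBowtieSystem

theorem add_sqrt_lt_two_mul_iff {t lam : ℝ} (h : t + 2 < 2 * lam) :
    t + 2 + √(t ^ 2 + 12 * t + 4) < 2 * lam ↔ 0 < lam ^ 2 - (t + 2) * lam - 2 * t := by
  have discrim_eq : discrim 1 (-(t + 2)) (-(2 * t)) = t ^ 2 + 12 * t + 4 := by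
    rw [discrim]
    ring
  have monic_case := sqrt_discrim_lt_iff (a := 1) (b := -(t + 2)) (c := -(2 * t)) (x := lam)
    one_pos (by linarith)
  rw [discrim_eq] at monic_case
  convert monic_case using 1
  · rw [mul_one, ← sub_eq_add_neg, lt_sub_iff_add_lt']
  · ring_nf

theorem shadow_rank_one_iff_general {t lam a b c d e : ℝ} (ht : 0 ≤ t)
    (hlam : 0 < lam) (ha : 0 < a) (hb : 0 < b) (hc : 0 < c) (hd : 0 < d) (he : 0 < e)
    (h : PleatedBowtieSystem t lam a b c d e) :
    (a > b ∧ a > c ∧ a > d ∧ a > e) ↔ 2 * lam > t + 2 + √(t ^ 2 + 12 * t + 4) := by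
  have others_lt : a > c ∧ a > d ∧ a > e :=
    ⟨h.right_leaf_lt_center ht hlam hd he.le, h.left_hub_lt_center ht hlam.le hb,
      h.left_leaf_lt_center ht hlam.le hb hd.le he.le⟩
  have past_vertex : t + 2 < 2 * lam := by
    linarith [h.add_one_lt_eigenvalue ht ha hb hc.le]
  calc (a > b ∧ a > c ∧ a > d ∧ a > e)
      ↔ b < a := and_iff_left others_lt
    _ ↔ 0 < lam ^ 2 - (t + 2) * lam - 2 * t := h.right_hub_lt_center_iff hlam hb
    _ ↔ 2 * lam > t + 2 + √(t ^ 2 + 12 * t + 4) := (add_sqrt_lt_two_mul_iff past_vertex).symm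

/-- For the system (WT) of eigenequations of the clique-shadow of the
t-pleated bowtie, the center entry `a = x(c)` is strictly largest if and only if
`2λ > t + 2 + √(t² + 12t + 4)`. -/
theorem shadow_rank_one_iff (t : ℕ) (ht : 1 ≤ t)
    (lam a b c d e : ℝ)
    (hlam : 0 < lam) (ha : 0 < a) (hb : 0 < b) (hc : 0 < c) (hd : 0 < d) (he : 0 < e)
    (h1 : lam * a = 2 * b + (t + 1) * (d + e))
    (h2 : lam * b = a + (t + 1) * b + t * c)
    (h3 : lam * c = 2 * b)
    (h4 : lam * d = (t + 1) * (a + e))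
    (h5 : lam * e = a + d) :
    (a > b ∧ a > c ∧ a > d ∧ a > e) ↔
      2 * lam > (t : ℝ) + 2 + Real.sqrt ((t : ℝ) ^ 2 + 12 * t + 4) :=
  shadow_rank_one_iff_general t.cast_nonneg hlam ha hb hc hd he ⟨h1, h2, h3, h4, h5⟩
end

section
/- Let ρ, α, β, γ, δ, ε be strictly positive reals satisfying the system (BT) with t = 8, namely ρα² = β² + 9δε, ρβ² = αβ + 8βγ, ργ² = β², ρδ² = 9αε, ρε² = αδ, together with the normalization α³ + 2β³ + 8γ³ + δ³ + 9ε³ = 1. Then β > α, β > γ, β > δ, and β > ε. (Equivalently: in the principal eigenvector of the 8-pleated bowtie B₈, the vertices r₁ and r₂ are strictly the most central, so r₁, r₂ have spectral rank 1 in B₈.) -/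
/-!
Put `s = β / γ`. The equations at `r_j` and `r₁` say that `ρ = s²` and `α / γ = s³ - t`, and the two
equations at the left star combine to `ρ² δ ε = (t + 1) α²`. Substituting into the equation at `c`
leaves the single relation `(s³ - t)² (s⁶ - (t + 1)²) = s⁶`.

In particular `ρ³ = s⁶ > (t + 1)²`, which makes `c` dominate the left star and `r₁` dominate the
`r_j`. If `α ≥ β`, then `t ≤ s³ - s`, and the relation degenerates to `(s² - s - 1)² ≤ 2`; this
fails as soon as `s³ - s ≥ 8`.
-/

/-- The system (BT): the eigenequations, for the eigenvalue `ρ`, of a strictly positive eigenvector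
of the `t`-pleated bowtie, whose left star has `t + 1` edges `{c, ℓ₁, ℓ_j}` and whose right star has
`t` edges `{r₁, r₂, r_j}`. The entries are `α` at `c`, `β` at `r₁` and `r₂`, `γ` at the other `r_j`,
`δ` at `ℓ₁` and `ε` at the other `ℓ_j`. The number of pleats is allowed to be real, and no
normalization is imposed. -/
structure PleatedBowtieSystem_s8 (t ρ α β γ δ ε : ℝ) : Prop where
  c_pos : 0 < α
  r₁_pos : 0 < β
  r_pos : 0 < γ
  l₁_pos : 0 < δ
  l_pos : 0 < ε
  eq_c : ρ * α ^ 2 = β ^ 2 + (t + 1) * δ * ε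
  eq_r₁ : ρ * β ^ 2 = α * β + t * β * γ
  eq_r : ρ * γ ^ 2 = β ^ 2
  eq_l₁ : ρ * δ ^ 2 = (t + 1) * α * ε
  eq_l : ρ * ε ^ 2 = α * δ

section Hyperstar

-- `n` edges `{c, hub, leaf}`, with entries `α` at `c`, `δ` at the hub and `ε` at the leaves.
variable {R : Type*} [CommRing R] [IsDomain R] {n ρ α δ ε : R}

theorem hyperstar_eigenvalue_sq_mul_hub_mul_leaf (hδ : δ ≠ 0) (hε : ε ≠ 0)
    (hδ_eq : ρ * δ ^ 2 = n * α * ε) (hε_eq : ρ * ε ^ 2 = α * δ) :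
    ρ ^ 2 * (δ * ε) = n * α ^ 2 := by
  apply mul_right_cancel₀ (mul_ne_zero hδ hε)
  linear_combination ρ * ε ^ 2 * hδ_eq + n * α * ε * hε_eq

theorem hyperstar_eigenvalue_cube_mul_hub_cube (hδ : δ ≠ 0)
    (hδ_eq : ρ * δ ^ 2 = n * α * ε) (hε_eq : ρ * ε ^ 2 = α * δ) :
    ρ ^ 3 * δ ^ 3 = n ^ 2 * α ^ 3 := by
  apply mul_right_cancel₀ hδ
  linear_combination ρ * (ρ * δ ^ 2 + n * α * ε) * hδ_eq + n ^ 2 * α ^ 2 * hε_eq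

theorem hyperstar_eigenvalue_cube_mul_leaf_cube (hε : ε ≠ 0)
    (hδ_eq : ρ * δ ^ 2 = n * α * ε) (hε_eq : ρ * ε ^ 2 = α * δ) :
    ρ ^ 3 * ε ^ 3 = n * α ^ 3 := by
  apply mul_right_cancel₀ hε
  linear_combination ρ * (ρ * ε ^ 2 + α * δ) * hε_eq + α ^ 2 * hδ_eq

end Hyperstar

theorem lt_of_mul_pow_eq_mul_pow {R : Type*} [Semiring R] [LinearOrder R]
    [IsStrictOrderedRing R] {a b x y : R} {k : ℕ} (ha : 0 ≤ a) (hab : a < b) (hy : 0 < y)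
    (h : b * x ^ k = a * y ^ k) : x < y := by
  by_contra! hyx
  have : a * y ^ k < b * x ^ k := calc
    a * y ^ k < b * y ^ k := by gcongr
    _ ≤ b * x ^ k := by gcongr; exact ha.trans hab.le
  exact this.ne' h

theorem sq_lt_pow_six_of_ratio_eq {t s : ℝ} (hs : s ≠ 0)
    (h : (s ^ 3 - t) ^ 2 * (s ^ 6 - (t + 1) ^ 2) = s ^ 6) : (t + 1) ^ 2 < s ^ 6 := by
  have prod_pos : 0 < (s ^ 3 - t) ^ 2 * (s ^ 6 - (t + 1) ^ 2) := by
    rw [h]; positivity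
  exact sub_pos.mp (pos_of_mul_pos_right prod_pos (sq_nonneg _))

theorem cube_sub_lt_self_of_ratio_eq {t s : ℝ} (ht : 8 ≤ t) (hs : 0 < s)
    (h : (s ^ 3 - t) ^ 2 * (s ^ 6 - (t + 1) ^ 2) = s ^ 6) : s ^ 3 - t < s := by
  by_contra! hst
  have gap_nonneg : 0 ≤ s ^ 6 - (t + 1) ^ 2 :=
    sub_nonneg.mpr (sq_lt_pow_six_of_ratio_eq hs.ne' h).le
  have gap_le : s ^ 6 - (t + 1) ^ 2 ≤ s ^ 4 := by
    refine le_of_mul_le_mul_left ?_ (pow_pos hs 2)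
    calc s ^ 2 * (s ^ 6 - (t + 1) ^ 2)
        ≤ (s ^ 3 - t) ^ 2 * (s ^ 6 - (t + 1) ^ 2) := by gcongr
      _ = s ^ 2 * s ^ 4 := by rw [h]; ring
  have sq_le : (t + 1) ^ 2 ≤ (s ^ 3 - s + 1) ^ 2 := by
    gcongr
    linarith
  have quad_sq_le : (s ^ 2 - s - 1) ^ 2 ≤ 2 := by
    calc (s ^ 2 - s - 1) ^ 2 = s ^ 6 - (s ^ 3 - s + 1) ^ 2 - s ^ 4 + 2 := by ring
      _ ≤ 2 := by linarith
  have lt_s : 2.15 < s := by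
    by_contra! s_le
    nlinarith
  have lt_quad : 1.45 < s ^ 2 - s - 1 := by
    nlinarith
  have lt_quad_sq : 1.45 ^ 2 < (s ^ 2 - s - 1) ^ 2 := by gcongr
  linarith [quad_sq_le]

namespace PleatedBowtieSystem_s8

variable {t ρ α β γ δ ε : ℝ}

theorem eigenvalue_eq (h : PleatedBowtieSystem_s8 t ρ α β γ δ ε) : ρ = (β / γ) ^ 2 := by
  rw [div_pow, eq_div_iff (pow_ne_zero 2 h.r_pos.ne'), h.eq_r]

theorem div_eq_cube_sub (h : PleatedBowtieSystem_s8 t ρ α β γ δ ε) :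
    α / γ = (β / γ) ^ 3 - t := by
  have hγ : γ ≠ 0 := h.r_pos.ne'
  have eq_r₁_div : ρ * β = α + t * γ := by
    apply mul_right_cancel₀ h.r₁_pos.ne'
    linear_combination h.eq_r₁
  calc α / γ = ρ * (β / γ) - t := by field_simp; linear_combination -eq_r₁_div
    _ = (β / γ) ^ 3 - t := by rw [h.eigenvalue_eq]; ring

theorem ratio_eq (h : PleatedBowtieSystem_s8 t ρ α β γ δ ε) :
    ((β / γ) ^ 3 - t) ^ 2 * ((β / γ) ^ 6 - (t + 1) ^ 2) = (β / γ) ^ 6 := by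
  have star : ρ ^ 2 * (δ * ε) = (t + 1) * α ^ 2 :=
    hyperstar_eigenvalue_sq_mul_hub_mul_leaf h.l₁_pos.ne' h.l_pos.ne' h.eq_l₁ h.eq_l
  have elim : α ^ 2 * (ρ ^ 3 - (t + 1) ^ 2) = ρ ^ 2 * β ^ 2 := by
    linear_combination ρ ^ 2 * h.eq_c + (t + 1) * star
  calc ((β / γ) ^ 3 - t) ^ 2 * ((β / γ) ^ 6 - (t + 1) ^ 2)
      = α ^ 2 * (ρ ^ 3 - (t + 1) ^ 2) / γ ^ 2 := by
        rw [← h.div_eq_cube_sub, h.eigenvalue_eq]; ring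
    _ = (β / γ) ^ 6 := by rw [elim, h.eigenvalue_eq]; ring

theorem sq_lt_eigenvalue_cube (h : PleatedBowtieSystem_s8 t ρ α β γ δ ε) :
    (t + 1) ^ 2 < ρ ^ 3 := by
  rw [h.eigenvalue_eq, ← pow_mul]
  exact sq_lt_pow_six_of_ratio_eq (div_ne_zero h.r₁_pos.ne' h.r_pos.ne') h.ratio_eq

theorem l₁_lt_c (h : PleatedBowtieSystem_s8 t ρ α β γ δ ε) : δ < α :=
  lt_of_mul_pow_eq_mul_pow (sq_nonneg _) h.sq_lt_eigenvalue_cube h.c_pos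
    (hyperstar_eigenvalue_cube_mul_hub_cube h.l₁_pos.ne' h.eq_l₁ h.eq_l)

theorem l_lt_c (h : PleatedBowtieSystem_s8 t ρ α β γ δ ε) (ht : 0 ≤ t) : ε < α :=
  have lt_cube : t + 1 < ρ ^ 3 :=
    (le_self_pow₀ (by linarith) two_ne_zero).trans_lt h.sq_lt_eigenvalue_cube
  lt_of_mul_pow_eq_mul_pow (by linarith) lt_cube h.c_pos
    (hyperstar_eigenvalue_cube_mul_leaf_cube h.l_pos.ne' h.eq_l₁ h.eq_l)

theorem r_lt_r₁ (h : PleatedBowtieSystem_s8 t ρ α β γ δ ε) (ht : 0 ≤ t) : γ < β := by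
  have one_lt_pow : 1 < (β / γ) ^ 6 := calc
    1 ≤ (t + 1) ^ 2 := one_le_pow₀ (by linarith)
    _ < ρ ^ 3 := h.sq_lt_eigenvalue_cube
    _ = (β / γ) ^ 6 := by rw [h.eigenvalue_eq, ← pow_mul]
  have hs : 0 < β / γ := div_pos h.r₁_pos h.r_pos
  exact (one_lt_div h.r_pos).mp ((one_lt_pow_iff_of_nonneg hs.le (by norm_num)).mp one_lt_pow)

theorem c_lt_r₁ (h : PleatedBowtieSystem_s8 t ρ α β γ δ ε) (ht : 8 ≤ t) : α < β := by
  have ratio_lt : α / γ < β / γ := by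
    rw [h.div_eq_cube_sub]
    exact cube_sub_lt_self_of_ratio_eq ht (div_pos h.r₁_pos h.r_pos) h.ratio_eq
  exact (div_lt_div_iff_of_pos_right h.r_pos).mp ratio_lt

end PleatedBowtieSystem_s8

theorem bowtie_eight_rank_one_general {t ρ α β γ δ ε : ℝ} (ht : 8 ≤ t)
    (h : PleatedBowtieSystem_s8 t ρ α β γ δ ε) : β > α ∧ β > γ ∧ β > δ ∧ β > ε :=
  have ht₀ : 0 ≤ t := by linarith
  have hαβ : α < β := h.c_lt_r₁ ht
  ⟨hαβ, h.r_lt_r₁ ht₀, h.l₁_lt_c.trans hαβ, (h.l_lt_c ht₀).trans hαβ⟩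

/-- For the system (BT) with `t = 8` (the eigenequations of the
8-pleated bowtie `B₈`) together with the normalization `α³ + 2β³ + 8γ³ + δ³ + 9ε³ = 1`,
the entries `β = y(r₁) = y(r₂)` are strictly the largest: the vertices `r₁, r₂`
have spectral rank 1 in `B₈`. -/
theorem bowtie_eight_rank_one
    (ρ α β γ δ ε : ℝ)
    (hρ : 0 < ρ) (hα : 0 < α) (hβ : 0 < β) (hγ : 0 < γ) (hδ : 0 < δ) (hε : 0 < ε)
    (h1 : ρ * α ^ 2 = β ^ 2 + 9 * δ * ε)
    (h2 : ρ * β ^ 2 = α * β + 8 * β * γ)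
    (h3 : ρ * γ ^ 2 = β ^ 2)
    (h4 : ρ * δ ^ 2 = 9 * α * ε)
    (h5 : ρ * ε ^ 2 = α * δ)
    (hnorm : α ^ 3 + 2 * β ^ 3 + 8 * γ ^ 3 + δ ^ 3 + 9 * ε ^ 3 = 1) :
    β > α ∧ β > γ ∧ β > δ ∧ β > ε := by
  exact bowtie_eight_rank_one_general le_rfl
    ⟨hα, hβ, hγ, hδ, hε, by linarith, h2, h3, by linarith, h5⟩
end

section
/- Let λ, a, b, c, d, e be strictly positive reals satisfying the system (WT) with t = 8, namely λa = 2b + 9(d+e), λb = a + 9b + 8c, λc = 2b, λd = 9(a+e), λe = a + d. Then a > b, a > c, a > d, and a > e. (Equivalently: in the principal eigenvector of the co-occurrence matrix of the 8-pleated bowtie B₈, the vertex c is strictly the most central, so c has spectral rank 1 in the clique-shadow ∂*B₈. Together with the corresponding result for B₈ itself, this shows the umbral index of B₈ equals 1: the spectral rank 1 vertices of B₈ and of ∂*B₈ are distinct.) -/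
/-! Write `Q = λ² - (t + 2)λ - 2t`. Eliminating `c` from the equations of the right wing gives
`b Q = λ (a - b)`, so `a > b` exactly when `Q > 0`. Eliminating `d` and `e` from the equations of
the left wing gives `2 (b - a) (λ² - (t + 1)) = a ((λ + t) Q - 3λ - 2t)`. As `λ² > t + 1`, having
`a ≤ b` would make the left side nonnegative and, since then `Q ≤ 0`, the right side negative.
Once `Q > 0` is known, `λ > t + 2` and the remaining entries are compared with `a` directly. -/

/-- The system (WT) for the `t`-pleated bowtie: the eigenequations, with eigenvalue `lam`, of its
co-occurrence matrix. The entries of the eigenvector are `a` at the center, `b` at `r₁` and `r₂`,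
`c` at the other `rᵢ`, `d` at `ℓ₁` and `e` at the other `ℓⱼ`. Besides `{c, r₁, r₂}` there are `t`
edges `{r₁, r₂, rᵢ}` and `t + 1` edges `{c, ℓ₁, ℓⱼ}`; here `t` may be any element of the ring. -/
structure WTSystem {R : Type*} [CommRing R] (t lam a b c d e : R) : Prop where
  center : lam * a = 2 * b + (t + 1) * (d + e)
  right_core : lam * b = a + (t + 1) * b + t * c
  right_tip : lam * c = 2 * b
  left_core : lam * d = (t + 1) * (a + e)
  left_tip : lam * e = a + d

namespace WTSystem

section Elimination

variable {R : Type*} [CommRing R] {t lam a b c d e : R}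

lemma right_core_mul (h : WTSystem t lam a b c d e) :
    b * (lam ^ 2 - (t + 2) * lam - 2 * t) = lam * (a - b) := by
  linear_combination lam * h.right_core + t * h.right_tip

lemma left_core_mul (h : WTSystem t lam a b c d e) :
    d * (lam ^ 2 - (t + 1)) = a * ((t + 1) * (lam + 1)) := by
  linear_combination lam * h.left_core + (t + 1) * h.left_tip

lemma left_tip_mul (h : WTSystem t lam a b c d e) :
    e * (lam ^ 2 - (t + 1)) = a * (lam + (t + 1)) := by
  linear_combination h.left_core + lam * h.left_tip

lemma two_mul_right_core_sub_center_mul (h : WTSystem t lam a b c d e) :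
    2 * (b - a) * (lam ^ 2 - (t + 1)) =
      a * ((lam + t) * (lam ^ 2 - (t + 2) * lam - 2 * t) - 3 * lam - 2 * t) := by
  linear_combination -(lam ^ 2 - (t + 1)) * h.center - (t + 1) * h.left_core_mul
    - (t + 1) * h.left_tip_mul

lemma center_sub_left_core_mul (h : WTSystem t lam a b c d e) :
    (a - d) * (lam ^ 2 - (t + 1)) =
      a * ((lam ^ 2 - (t + 2) * lam - 2 * t) + (lam - 2)) := by
  linear_combination -h.left_core_mul

end Elimination

section Order

variable {R : Type*} [CommRing R] [LinearOrder R] [IsStrictOrderedRing R] {t lam a b c d e : R}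

lemma add_one_lt_eigenvalue (h : WTSystem t lam a b c d e) (ht : 0 ≤ t) (hlam : 0 < lam)
    (ha : 0 < a) (hb : 0 < b) : t + 1 < lam := by
  have hmul : b * (lam * (lam - (t + 1))) = lam * a + 2 * t * b := by
    linear_combination h.right_core_mul
  have hpos : 0 < b * (lam * (lam - (t + 1))) := by rw [hmul]; positivity
  exact sub_pos.1 (pos_of_mul_pos_right (pos_of_mul_pos_right hpos hb.le) hlam.le)

lemma add_one_lt_eigenvalue_sq (h : WTSystem t lam a b c d e) (ht : 0 ≤ t) (hlam : 0 < lam)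
    (ha : 0 < a) (hb : 0 < b) : t + 1 < lam ^ 2 := by
  have hlt := h.add_one_lt_eigenvalue ht hlam ha hb
  have one_lt : 1 < lam := by linarith
  exact hlt.trans (lt_self_pow₀ one_lt one_lt_two)

lemma right_core_lt_center (h : WTSystem t lam a b c d e) (ht : 0 ≤ t) (hlam : 0 < lam)
    (ha : 0 < a) (hb : 0 < b) : b < a := by
  by_contra! hab
  have hQ : lam ^ 2 - (t + 2) * lam - 2 * t ≤ 0 := by
    refine nonpos_of_mul_nonpos_right ?_ hb
    rw [h.right_core_mul]
    exact mul_nonpos_of_nonneg_of_nonpos hlam.le (sub_nonpos.2 hab)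
  have left_nonneg : 0 ≤ 2 * (b - a) * (lam ^ 2 - (t + 1)) :=
    mul_nonneg (mul_nonneg zero_le_two (sub_nonneg.2 hab))
      (sub_nonneg.2 (h.add_one_lt_eigenvalue_sq ht hlam ha hb).le)
  have right_neg :
      a * ((lam + t) * (lam ^ 2 - (t + 2) * lam - 2 * t) - 3 * lam - 2 * t) < 0 := by
    have := mul_nonpos_of_nonneg_of_nonpos (add_nonneg hlam.le ht) hQ
    exact mul_neg_of_pos_of_neg ha (by linarith)
  exact (left_nonneg.trans_eq h.two_mul_right_core_sub_center_mul).not_gt right_neg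

lemma quadratic_pos (h : WTSystem t lam a b c d e) (ht : 0 ≤ t) (hlam : 0 < lam)
    (ha : 0 < a) (hb : 0 < b) : 0 < lam ^ 2 - (t + 2) * lam - 2 * t := by
  refine pos_of_mul_pos_right ?_ hb.le
  rw [h.right_core_mul]
  exact mul_pos hlam (sub_pos.2 (h.right_core_lt_center ht hlam ha hb))

lemma add_two_lt_eigenvalue (h : WTSystem t lam a b c d e) (ht : 0 ≤ t) (hlam : 0 < lam)
    (ha : 0 < a) (hb : 0 < b) : t + 2 < lam := by
  have hQ := h.quadratic_pos ht hlam ha hb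
  have hpos : 0 < lam * (lam - (t + 2)) := by linarith
  exact sub_pos.1 (pos_of_mul_pos_right hpos hlam.le)

lemma left_core_lt_center (h : WTSystem t lam a b c d e) (ht : 0 ≤ t) (hlam : 0 < lam)
    (ha : 0 < a) (hb : 0 < b) : d < a := by
  have hQ := h.quadratic_pos ht hlam ha hb
  have hlt := h.add_two_lt_eigenvalue ht hlam ha hb
  have hsq := h.add_one_lt_eigenvalue_sq ht hlam ha hb
  have hpos : 0 < (a - d) * (lam ^ 2 - (t + 1)) := by
    rw [h.center_sub_left_core_mul]
    exact mul_pos ha (by linarith)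
  exact sub_pos.1 (pos_of_mul_pos_left hpos (sub_nonneg.2 hsq.le))

lemma two_mul_center_lt (h : WTSystem t lam a b c d e) (ht : 0 ≤ t) (hlam : 0 < lam)
    (ha : 0 < a) (hb : 0 < b) : 2 * a < lam * a := by
  have hlt := h.add_two_lt_eigenvalue ht hlam ha hb
  exact mul_lt_mul_of_pos_right (by linarith) ha

lemma right_tip_lt_center (h : WTSystem t lam a b c d e) (ht : 0 ≤ t) (hlam : 0 < lam)
    (ha : 0 < a) (hb : 0 < b) : c < a := by
  refine lt_of_mul_lt_mul_left ?_ hlam.le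
  calc lam * c = 2 * b := h.right_tip
    _ < 2 * a := by linarith [h.right_core_lt_center ht hlam ha hb]
    _ < lam * a := h.two_mul_center_lt ht hlam ha hb

lemma left_tip_lt_center (h : WTSystem t lam a b c d e) (ht : 0 ≤ t) (hlam : 0 < lam)
    (ha : 0 < a) (hb : 0 < b) : e < a := by
  refine lt_of_mul_lt_mul_left ?_ hlam.le
  calc lam * e = a + d := h.left_tip
    _ < 2 * a := by linarith [h.left_core_lt_center ht hlam ha hb]
    _ < lam * a := h.two_mul_center_lt ht hlam ha hb

end Order

end WTSystem

theorem shadow_eight_rank_one_general {R : Type*} [CommRing R] [LinearOrder R]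
    [IsStrictOrderedRing R] {t lam a b c d e : R} (h : WTSystem t lam a b c d e)
    (ht : 0 ≤ t) (hlam : 0 < lam) (ha : 0 < a) (hb : 0 < b) :
    a > b ∧ a > c ∧ a > d ∧ a > e :=
  ⟨h.right_core_lt_center ht hlam ha hb, h.right_tip_lt_center ht hlam ha hb,
    h.left_core_lt_center ht hlam ha hb, h.left_tip_lt_center ht hlam ha hb⟩

/-- For the system (WT) with `t = 8` (the eigenequations of the
co-occurrence matrix of the 8-pleated bowtie `B₈`), the center entry `a = x(c)` is
strictly the largest: the vertex `c` has spectral rank 1 in the clique-shadow `∂*B₈`. -/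
theorem shadow_eight_rank_one
    (lam a b c d e : ℝ)
    (hlam : 0 < lam) (ha : 0 < a) (hb : 0 < b) (hc : 0 < c) (hd : 0 < d) (he : 0 < e)
    (h1 : lam * a = 2 * b + 9 * (d + e))
    (h2 : lam * b = a + 9 * b + 8 * c)
    (h3 : lam * c = 2 * b)
    (h4 : lam * d = 9 * (a + e))
    (h5 : lam * e = a + d) :
    a > b ∧ a > c ∧ a > d ∧ a > e := by
  have hWT : WTSystem 8 lam a b c d e :=
    ⟨by linarith, by linarith, h3, by linarith, h5⟩
  exact shadow_eight_rank_one_general hWT (by norm_num) hlam ha hb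
end

section
/- Let O_R be the 3-uniform hypergraph on vertices {T, B, U, P, Q, R, S} with edges {T,P,Q}, {T,R,S}, {B,Q,R}, {B,P,S}, {U,P,Q}. Let (ρ, y) be a positive eigenpair of O_R satisfying the symmetries y_P = y_Q and y_R = y_S. Then y_T > y_B. (Since in the clique-shadow ∂*O_R the vertices T and B are exchanged by an automorphism and hence have equal principal-eigenvector entries, this shows O_R is opaque: its spectral ranking differs from that of its clique-shadow.) -/
/-!
The adjacency forms of `O_R` at `T` and `B` differ by `(y P - y R) * (y Q - y S)`, which is the
square `(y P - y R) ^ 2` on a symmetric vector. It cannot vanish, because the pendant edge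
`{U, P, Q}` contributes the extra term `y U * y Q` to the equation at `P`: if `y` were constant on
`{P, Q, R, S}`, this term would be the whole difference between the equations at `P` and `R`.
-/

open Finset

/-- The modified red octahedron `O_R`: the 3-uniform hypergraph on the vertices
`0 = T, 1 = B, 2 = U, 3 = P, 4 = Q, 5 = R, 6 = S` with edges
`{T,P,Q}, {T,R,S}, {B,Q,R}, {B,P,S}, {U,P,Q}`. -/
def redOctahedronEdges : Finset (Finset (Fin 7)) :=
  {{0, 3, 4}, {0, 5, 6}, {1, 4, 5}, {1, 3, 6}, {2, 3, 4}}

section Eigenpair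

variable {V R : Type*} [DecidableEq V]

/-- The value at the vertex `i` of the adjacency tensor of the hypergraph with edge set `E`, applied
to the vector `y`. The tensor is normalized so that each edge containing `i` counts once. -/
def adjacencyForm [CommSemiring R] (E : Finset (Finset V)) (y : V → R) (i : V) : R :=
  ∑ e ∈ E with i ∈ e, ∏ v ∈ e.erase i, y v

/-- `(ρ, y)` is an eigenpair of the adjacency tensor of the hypergraph with edge set `E`. For a
`k`-uniform hypergraph the exponent `n` is `k - 1`; the vector `y` may be zero. -/
def IsEigenpair [CommSemiring R] (E : Finset (Finset V)) (n : ℕ) (ρ : R) (y : V → R) : Prop :=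
  ∀ i, ρ * y i ^ n = adjacencyForm E y i

theorem adjacencyForm_nonneg [CommSemiring R] [PartialOrder R] [IsOrderedRing R]
    (E : Finset (Finset V)) {y : V → R} (hy : ∀ v, 0 ≤ y v) (i : V) :
    0 ≤ adjacencyForm E y i :=
  sum_nonneg fun _ _ ↦ prod_nonneg fun v _ ↦ hy v

theorem IsEigenpair.lt_of_adjacencyForm_lt [CommSemiring R] [LinearOrder R] [IsStrictOrderedRing R]
    {E : Finset (Finset V)} {n : ℕ} {ρ : R} {y : V → R} (h : IsEigenpair E n ρ y)
    (hy : ∀ v, 0 ≤ y v) {i j : V} (hij : adjacencyForm E y i < adjacencyForm E y j) :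
    y i < y j := by
  have hρ : 0 < ρ := by
    have hj : 0 < ρ * y j ^ n := h j ▸ (adjacencyForm_nonneg E hy i).trans_lt hij
    exact pos_of_mul_pos_left hj (pow_nonneg (hy j) n)
  rw [← h i, ← h j] at hij
  exact lt_of_pow_lt_pow_left₀ n (hy j) (lt_of_mul_lt_mul_left hij hρ.le)

end Eigenpair

section RedOctahedron

variable {R : Type*}

theorem adjacencyForm_redOctahedron_T [CommSemiring R] (y : Fin 7 → R) :
    adjacencyForm redOctahedronEdges y 0 = y 3 * y 4 + y 5 * y 6 := by
  have hlink : {e ∈ redOctahedronEdges | 0 ∈ e} = {{0, 3, 4}, {0, 5, 6}} := by decide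
  rw [adjacencyForm, hlink, sum_pair (by decide)]
  simp

theorem adjacencyForm_redOctahedron_B [CommSemiring R] (y : Fin 7 → R) :
    adjacencyForm redOctahedronEdges y 1 = y 4 * y 5 + y 3 * y 6 := by
  have hlink : {e ∈ redOctahedronEdges | 1 ∈ e} = {{1, 4, 5}, {1, 3, 6}} := by decide
  rw [adjacencyForm, hlink, sum_pair (by decide)]
  simp

theorem adjacencyForm_redOctahedron_P [CommSemiring R] (y : Fin 7 → R) :
    adjacencyForm redOctahedronEdges y 3 = y 0 * y 4 + y 1 * y 6 + y 2 * y 4 := by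
  have hlink : {e ∈ redOctahedronEdges | 3 ∈ e} = {{0, 3, 4}, {1, 3, 6}, {2, 3, 4}} := by decide
  rw [adjacencyForm, hlink, sum_insert (by decide), sum_pair (by decide), ← add_assoc]
  simp [erase_insert_of_ne]

theorem adjacencyForm_redOctahedron_R [CommSemiring R] (y : Fin 7 → R) :
    adjacencyForm redOctahedronEdges y 5 = y 0 * y 6 + y 1 * y 4 := by
  have hlink : {e ∈ redOctahedronEdges | 5 ∈ e} = {{0, 5, 6}, {1, 4, 5}} := by decide
  rw [adjacencyForm, hlink, sum_pair (by decide)]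
  simp [erase_insert_of_ne]

theorem adjacencyForm_redOctahedron_T_sub_B [CommRing R] (y : Fin 7 → R) :
    adjacencyForm redOctahedronEdges y 0 - adjacencyForm redOctahedronEdges y 1 =
      (y 3 - y 5) * (y 4 - y 6) := by
  rw [adjacencyForm_redOctahedron_T, adjacencyForm_redOctahedron_B]
  ring

theorem adjacencyForm_redOctahedron_P_sub_R [CommRing R] (y : Fin 7 → R) :
    adjacencyForm redOctahedronEdges y 3 - adjacencyForm redOctahedronEdges y 5 =
      (y 0 - y 1) * (y 4 - y 6) + y 2 * y 4 := by
  rw [adjacencyForm_redOctahedron_P, adjacencyForm_redOctahedron_R]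
  ring

theorem IsEigenpair.redOctahedron_P_ne_R [CommRing R] [NoZeroDivisors R] {n : ℕ} {ρ : R}
    {y : Fin 7 → R} (h : IsEigenpair redOctahedronEdges n ρ y) (hU : y 2 ≠ 0) (hQ : y 4 ≠ 0)
    (hPQ : y 3 = y 4) (hRS : y 5 = y 6) : y 3 ≠ y 5 := by
  intro hPR
  have hQS : y 4 = y 6 := by rw [← hPQ, hPR, hRS]
  have hUQ : y 2 * y 4 = 0 := calc
    y 2 * y 4 = (y 0 - y 1) * (y 4 - y 6) + y 2 * y 4 := by rw [hQS]; ring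
    _ = ρ * y 3 ^ n - ρ * y 5 ^ n := by rw [← adjacencyForm_redOctahedron_P_sub_R, h 3, h 5]
    _ = 0 := by rw [hPR, sub_self]
  exact mul_ne_zero hU hQ hUQ

theorem redOctahedron_T_gt_B_general [CommRing R] [LinearOrder R] [IsStrictOrderedRing R]
    {n : ℕ} {ρ : R} {y : Fin 7 → R} (hy : ∀ v, 0 < y v)
    (h : IsEigenpair redOctahedronEdges n ρ y) (hPQ : y 3 = y 4) (hRS : y 5 = y 6) :
    y 1 < y 0 := by
  have hPR : y 3 ≠ y 5 := h.redOctahedron_P_ne_R (hy 2).ne' (hy 4).ne' hPQ hRS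
  refine h.lt_of_adjacencyForm_lt (fun v ↦ (hy v).le) (sub_pos.mp ?_)
  calc 0 < (y 3 - y 5) ^ 2 := sq_pos_of_ne_zero (sub_ne_zero.mpr hPR)
    _ = (y 3 - y 5) * (y 4 - y 6) := by rw [← hPQ, ← hRS, sq]
    _ = adjacencyForm redOctahedronEdges y 0 - adjacencyForm redOctahedronEdges y 1 :=
      (adjacencyForm_redOctahedron_T_sub_B y).symm

end RedOctahedron

/-- For any positive eigenpair `(ρ, y)` of `O_R` satisfying the
symmetries `y P = y Q` and `y R = y S`, one has `y T > y B`.  (Hence `O_R` is opaque: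
in its clique-shadow `T` and `B` have equal principal-eigenvector entries.) -/
theorem redOctahedron_T_gt_B
    (ρ : ℝ) (y : Fin 7 → ℝ) (hy : ∀ v, 0 < y v)
    (heig : ∀ i : Fin 7, ρ * y i ^ 2 =
      ∑ e ∈ redOctahedronEdges.filter (fun e => i ∈ e), ∏ v ∈ e.erase i, y v)
    (hPQ : y 3 = y 4) (hRS : y 5 = y 6) :
    y 0 > y 1 :=
  redOctahedron_T_gt_B_general hy heig hPQ hRS
end

section
/- Let η ≥ 1 and k ≥ 1 be integers and let W(η, k) be the windmill graph: a center vertex c together with η pairwise disjoint copies of the complete graph K_k, with c adjacent to every other vertex. If x is a strictly positive vector with A x = λ x, where A is the adjacency matrix of W(η, k) and λ ∈ ℝ, then λ = (k−1)/2 + √(((k−1)/2)² + ηk). -/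
/-!
Write `n` for the degree of the universal vertex `c`, let every other vertex have degree `d`, and
put `S = ∑ v, x v`. Reading `A x = μ x` at `c` gives `(μ + 1) x_c = S`, so `x_c > 0` as soon as `x`
is nonnegative and nonzero. Summing `A x = μ x` over all vertices counts each `x v` once per
neighbor, whence `μ S = ∑ v, deg v * x v = d S + (n - d) x_c`. Eliminating `S` and cancelling `x_c`
gives `μ ^ 2 = (d - 1) μ + n`, whose roots have negative product `-n`; nonnegativity of `x` selects
the positive one. In `W(η, k)` the degrees are `n = η k` and `d = k`.
-/

open Finset Matrix

/-- The windmill graph `W(η, k)`: `η` pairwise vertex-disjoint copies of the complete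
graph `K_k` (the vertices `some (i, j)` with block index `i`), together with a center
vertex `none` adjacent to every other vertex. -/
def windmill (η k : ℕ) : SimpleGraph (Option (Fin η × Fin k)) where
  Adj u v := u ≠ v ∧ (u = none ∨ v = none ∨ ∃ i a b, u = some (i, a) ∧ v = some (i, b))
  symm := by
    constructor
    rintro u v ⟨hne, h⟩
    refine ⟨Ne.symm hne, ?_⟩
    rcases h with h | h | ⟨i, a, b, hu, hv⟩
    · exact Or.inr (Or.inl h)
    · exact Or.inl h
    · exact Or.inr (Or.inr ⟨i, b, a, hv, hu⟩)
  loopless := by constructor; rintro u ⟨hne, -⟩; exact hne rfl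

theorem eq_add_sqrt_of_sq_eq {b n t : ℝ} (hn : 0 < n) (ht : 0 ≤ t) (h : t ^ 2 = 2 * b * t + n) :
    t = b + √(b ^ 2 + n) := by
  have hprod : 0 < t * (t - 2 * b) := by linarith
  have hfactor : 0 < t - 2 * b := pos_of_mul_pos_right hprod ht
  have hsq : b ^ 2 + n = (t - b) ^ 2 := by linarith
  rw [hsq, Real.sqrt_sq (by linarith)]
  ring

theorem eigenvalue_nonneg_of_mulVec_eq_smul {n R : Type*} [Fintype n] [Semiring R] [LinearOrder R]
    [IsStrictOrderedRing R] {A : Matrix n n R} {μ : R} {x : n → R} {i : n}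
    (hA : ∀ j, 0 ≤ A i j) (hx : 0 ≤ x) (hi : 0 < x i) (heig : A *ᵥ x = μ • x) : 0 ≤ μ := by
  refine nonneg_of_mul_nonneg_left ?_ hi
  rw [← smul_eq_mul, ← Pi.smul_apply, ← heig]
  exact Finset.sum_nonneg fun j _ ↦ mul_nonneg (hA j) (hx j)

section UniversalVertex

variable {V R : Type*} [Fintype V] {G : SimpleGraph V} [DecidableRel G.Adj] {c : V} {d : ℕ}

theorem sum_adjMatrix_mulVec [NonAssocSemiring R] (x : V → R) :
    ∑ v, (G.adjMatrix R *ᵥ x) v = ∑ v, G.degree v * x v := by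
  simp only [SimpleGraph.adjMatrix_mulVec_apply]
  rw [Finset.sum_comm' (t' := univ) (s' := fun v ↦ G.neighborFinset v)
    (by simp [G.adj_comm])]
  simp

theorem adjMatrix_mulVec_add_of_isUniversal [NonAssocSemiring R] (hc : G.IsUniversal c)
    (x : V → R) : (G.adjMatrix R *ᵥ x) c + x c = ∑ v, x v := by
  classical
  rw [SimpleGraph.adjMatrix_mulVec_apply, (G.neighborFinset_eq_erase_univ c).2 hc,
    Finset.sum_erase_add _ _ (mem_univ c)]

theorem sum_degree_mul_of_degree_eq [NonAssocRing R] (hd : ∀ v ≠ c, G.degree v = d) (x : V → R) :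
    ∑ v, G.degree v * x v = d * ∑ v, x v + (G.degree c - d) * x c := by
  classical
  rw [← sub_eq_iff_eq_add', Finset.mul_sum, ← Finset.sum_sub_distrib]
  simp only [← sub_mul]
  exact Fintype.sum_eq_single c fun v hv ↦ by simp [hd v hv]

theorem eigenvalue_sq_eq_of_isUniversal [CommRing R] [NoZeroDivisors R] {μ : R} {x : V → R}
    (hc : G.IsUniversal c) (hd : ∀ v ≠ c, G.degree v = d) (hxc : x c ≠ 0)
    (hx : G.adjMatrix R *ᵥ x = μ • x) : μ ^ 2 = (d - 1) * μ + G.degree c := by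
  have hcenter : μ * x c + x c = ∑ v, x v := by
    rw [← adjMatrix_mulVec_add_of_isUniversal hc, hx, Pi.smul_apply, smul_eq_mul]
  have htotal : μ * ∑ v, x v = d * ∑ v, x v + (G.degree c - d) * x c := by
    rw [← sum_degree_mul_of_degree_eq hd, ← sum_adjMatrix_mulVec, hx]
    simp [Finset.mul_sum]
  refine mul_right_cancel₀ hxc ?_
  linear_combination htotal + (μ - d) * hcenter

theorem eigenvector_pos_of_isUniversal [Semiring R] [PartialOrder R] [IsOrderedCancelAddMonoid R]
    {μ : R} {x : V → R} (hc : G.IsUniversal c) (hx : 0 < x)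
    (heig : G.adjMatrix R *ᵥ x = μ • x) : 0 < x c := by
  have hsum : 0 < (μ + 1) * x c := by
    have hcenter := adjMatrix_mulVec_add_of_isUniversal hc x
    rw [heig, Pi.smul_apply, smul_eq_mul, ← add_one_mul] at hcenter
    exact hcenter ▸ Fintype.sum_pos hx
  exact (hx.le c).lt_of_ne' (right_ne_zero_of_mul hsum.ne')

end UniversalVertex

theorem windmill_principal_eigenvalue_general {V : Type*} [Fintype V] [Nontrivial V]
    {G : SimpleGraph V} [DecidableRel G.Adj] {c : V} {d : ℕ} (hc : G.IsUniversal c)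
    (hd : ∀ v ≠ c, G.degree v = d) {lam : ℝ} {x : V → ℝ} (hx : 0 < x)
    (heig : G.adjMatrix ℝ *ᵥ x = lam • x) :
    lam = ((d : ℝ) - 1) / 2 + √((((d : ℝ) - 1) / 2) ^ 2 + G.degree c) := by
  have hxc : 0 < x c := eigenvector_pos_of_isUniversal hc hx heig
  have hlam : 0 ≤ lam := by
    refine eigenvalue_nonneg_of_mulVec_eq_smul (fun v ↦ ?_) hx.le hxc heig
    rw [SimpleGraph.adjMatrix_apply]
    positivity
  have hdegree : 0 < G.degree c := (G.degree_pos c).2 (hc.not_isIsolated c)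
  refine eq_add_sqrt_of_sq_eq (mod_cast hdegree) hlam ?_
  linear_combination eigenvalue_sq_eq_of_isUniversal hc hd hxc.ne' heig

namespace windmill

variable {η k : ℕ}

theorem isUniversal_none : (windmill η k).IsUniversal none :=
  fun _ hv ↦ ⟨hv, .inl rfl⟩

theorem adj_some_some {i j : Fin η} {a b : Fin k} :
    (windmill η k).Adj (some (i, a)) (some (j, b)) ↔ i = j ∧ a ≠ b := by
  simp only [windmill]
  grind

variable [DecidableRel (windmill η k).Adj]

theorem degree_none : (windmill η k).degree none = η * k := by
  simp [(SimpleGraph.degree_eq_card_sub_one _ _).2 isUniversal_none]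

theorem degree_some (p : Fin η × Fin k) : (windmill η k).degree (some p) = k := by
  obtain ⟨i, a⟩ := p
  have hneighbors : (windmill η k).neighborFinset (some (i, a)) =
      insertNone (({a}ᶜ : Finset (Fin k)).map (.sectR i (Fin k))) := by
    ext (_ | ⟨j, b⟩)
    · simpa using (isUniversal_none (Option.some_ne_none (i, a)).symm).symm
    · simp [adj_some_some, and_comm, eq_comm]
  rw [← SimpleGraph.card_neighborFinset_eq_degree, hneighbors]
  simp [Finset.card_compl, Nat.sub_add_cancel a.pos]

end windmill

/-- Estrada. If `x` is a strictly positive eigenvector of the adjacency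
matrix of the windmill graph `W(η, k)` with eigenvalue `λ`, then
`λ = (k−1)/2 + √(((k−1)/2)² + ηk)`. -/
theorem windmill_principal_eigenvalue
    (η k : ℕ) (hη : 1 ≤ η) (hk : 1 ≤ k)
    (lam : ℝ) (x : Option (Fin η × Fin k) → ℝ) (hx : ∀ v, 0 < x v)
    (heig :
      letI : DecidableRel (windmill η k).Adj := Classical.decRel _
      (windmill η k).adjMatrix ℝ *ᵥ x = lam • x) :
    lam = ((k : ℝ) - 1) / 2 + Real.sqrt ((((k : ℝ) - 1) / 2) ^ 2 + η * k) := by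
  let : DecidableRel (windmill η k).Adj := Classical.decRel _
  have : Nonempty (Fin η × Fin k) := ⟨⟨0, hη⟩, ⟨0, hk⟩⟩
  have hxpos : 0 < x := lt_of_strongLT hx
  simpa [windmill.degree_none] using windmill_principal_eigenvalue_general
    windmill.isUniversal_none (Option.forall_ne_none.2 windmill.degree_some) hxpos heig
end

section
/- Let t ≥ 1 be an integer and let ρ, α, β, γ, δ, ε be strictly positive reals satisfying the system (BT): ρα² = β² + (t+1)δε, ρβ² = αβ + tβγ, ργ² = β², ρδ² = (t+1)αε, ρε² = αδ, together with the normalization α³ + 2β³ + tγ³ + δ³ + (t+1)ε³ = 1. Then the three color-class identities hold: α³ + tγ³ = 1/3, β³ + δ³ = 1/3, and β³ + (t+1)ε³ = 1/3. (These express that the t-pleated bowtie B_t is a 3-partite 3-uniform hypergraph with color classes {c, r₃, …, r_{t+2}}, {r₁, ℓ₁}, and {r₂, ℓ₂, …, ℓ_{t+2}}, each carrying one third of the k-norm mass of the principal eigenvector.) -/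
/-!
Multiplying the eigenequation at a vertex `v` by `y v` turns it into `ρ * y v ^ 3 = ∑ w e`, the sum
over the edges `e` through `v` of the edge weights `w e = ∏ u ∈ e, y u`. A color class meets every
edge exactly once, so summing over the class shows that its mass times `ρ` is the total edge weight,
whichever class is taken. Hence the three masses agree, and by the normalization each is `1 / 3`.
-/

section EdgeWeight

variable {R : Type*} [CommSemiring R] {t ρ α β γ δ ε : R}

/-- The total weight of the edges of `B_t`, where an edge weighs the product of the entries at its
vertices: one edge `{c, r₁, r₂}`, `t` edges `{r₁, r₂, r_j}` and `t + 1` edges `{c, ℓ₁, ℓ_j}`.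
The multiplicity `t` may be any element of `R`. -/
def bowtieEdgeWeight (t α β γ δ ε : R) : R :=
  α * β ^ 2 + t * (β ^ 2 * γ) + (t + 1) * (α * δ * ε)

theorem mul_cube_add_mul_cube_eq_bowtieEdgeWeight
    (hα : ρ * α ^ 2 = β ^ 2 + (t + 1) * δ * ε) (hγ : ρ * γ ^ 2 = β ^ 2) :
    ρ * (α ^ 3 + t * γ ^ 3) = bowtieEdgeWeight t α β γ δ ε :=
  calc
    ρ * (α ^ 3 + t * γ ^ 3) = α * (ρ * α ^ 2) + t * γ * (ρ * γ ^ 2) := by ring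
    _ = α * (β ^ 2 + (t + 1) * δ * ε) + t * γ * β ^ 2 := by rw [hα, hγ]
    _ = bowtieEdgeWeight t α β γ δ ε := by rw [bowtieEdgeWeight]; ring

theorem mul_cube_add_cube_eq_bowtieEdgeWeight
    (hβ : ρ * β ^ 2 = α * β + t * β * γ) (hδ : ρ * δ ^ 2 = (t + 1) * α * ε) :
    ρ * (β ^ 3 + δ ^ 3) = bowtieEdgeWeight t α β γ δ ε :=
  calc
    ρ * (β ^ 3 + δ ^ 3) = β * (ρ * β ^ 2) + δ * (ρ * δ ^ 2) := by ring
    _ = β * (α * β + t * β * γ) + δ * ((t + 1) * α * ε) := by rw [hβ, hδ]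
    _ = bowtieEdgeWeight t α β γ δ ε := by rw [bowtieEdgeWeight]; ring

theorem mul_cube_add_succ_mul_cube_eq_bowtieEdgeWeight
    (hβ : ρ * β ^ 2 = α * β + t * β * γ) (hε : ρ * ε ^ 2 = α * δ) :
    ρ * (β ^ 3 + (t + 1) * ε ^ 3) = bowtieEdgeWeight t α β γ δ ε :=
  calc
    ρ * (β ^ 3 + (t + 1) * ε ^ 3) = β * (ρ * β ^ 2) + (t + 1) * ε * (ρ * ε ^ 2) := by ring
    _ = β * (α * β + t * β * γ) + (t + 1) * ε * (α * δ) := by rw [hβ, hε]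
    _ = bowtieEdgeWeight t α β γ δ ε := by rw [bowtieEdgeWeight]; ring

end EdgeWeight

theorem eq_one_div_card_of_mul_eq_of_sum_eq_one {ι K : Type*} [Fintype ι] [DivisionRing K]
    {m : ι → K} {ρ w : K} (hρ : ρ ≠ 0) (hm : ∀ i, ρ * m i = w) (hsum : ∑ i, m i = 1)
    (i : ι) :
    m i = 1 / Fintype.card ι := by
  have m_const (j : ι) : m j = m i := mul_left_cancel₀ hρ ((hm j).trans (hm i).symm)
  have m_mul_card : m i * Fintype.card ι = 1 := by
    rw [← hsum, Fintype.sum_congr m _ m_const, Finset.sum_const, Finset.card_univ, nsmul_eq_mul,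
      Nat.cast_comm]
  exact eq_one_div_of_mul_eq_one_left m_mul_card

theorem bowtie_color_class_identities_general {K : Type*} [Field K]
    {t ρ α β γ δ ε : K} (hρ : ρ ≠ 0)
    (h1 : ρ * α ^ 2 = β ^ 2 + (t + 1) * δ * ε)
    (h2 : ρ * β ^ 2 = α * β + t * β * γ)
    (h3 : ρ * γ ^ 2 = β ^ 2)
    (h4 : ρ * δ ^ 2 = (t + 1) * α * ε)
    (h5 : ρ * ε ^ 2 = α * δ)
    (hnorm : α ^ 3 + 2 * β ^ 3 + t * γ ^ 3 + δ ^ 3 + (t + 1) * ε ^ 3 = 1) :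
    α ^ 3 + t * γ ^ 3 = 1 / 3 ∧ β ^ 3 + δ ^ 3 = 1 / 3 ∧ β ^ 3 + (t + 1) * ε ^ 3 = 1 / 3 := by
  let mass : Fin 3 → K := ![α ^ 3 + t * γ ^ 3, β ^ 3 + δ ^ 3, β ^ 3 + (t + 1) * ε ^ 3]
  have mul_mass (i : Fin 3) : ρ * mass i = bowtieEdgeWeight t α β γ δ ε := by
    fin_cases i
    · exact mul_cube_add_mul_cube_eq_bowtieEdgeWeight h1 h3
    · exact mul_cube_add_cube_eq_bowtieEdgeWeight h2 h4
    · exact mul_cube_add_succ_mul_cube_eq_bowtieEdgeWeight h2 h5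
  have sum_mass : ∑ i, mass i = 1 := by
    rw [← hnorm, Fin.sum_univ_three]
    simp only [mass, Matrix.cons_val]
    ring
  have mass_eq (i : Fin 3) : mass i = 1 / 3 := by
    simpa using eq_one_div_card_of_mul_eq_of_sum_eq_one hρ mul_mass sum_mass i
  exact ⟨mass_eq 0, mass_eq 1, mass_eq 2⟩

/-- For the system (BT) of eigenequations of the t-pleated bowtie `B_t`
together with the normalization `α³ + 2β³ + tγ³ + δ³ + (t+1)ε³ = 1`, each of the three
color classes of the 3-partite structure of `B_t` carries one third of the mass:
`α³ + tγ³ = 1/3`, `β³ + δ³ = 1/3`, and `β³ + (t+1)ε³ = 1/3`. -/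
theorem bowtie_color_class_identities (t : ℕ) (ht : 1 ≤ t)
    (ρ α β γ δ ε : ℝ)
    (hρ : 0 < ρ) (hα : 0 < α) (hβ : 0 < β) (hγ : 0 < γ) (hδ : 0 < δ) (hε : 0 < ε)
    (h1 : ρ * α ^ 2 = β ^ 2 + (t + 1) * δ * ε)
    (h2 : ρ * β ^ 2 = α * β + t * β * γ)
    (h3 : ρ * γ ^ 2 = β ^ 2)
    (h4 : ρ * δ ^ 2 = (t + 1) * α * ε)
    (h5 : ρ * ε ^ 2 = α * δ)
    (hnorm : α ^ 3 + 2 * β ^ 3 + t * γ ^ 3 + δ ^ 3 + (t + 1) * ε ^ 3 = 1) :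
    α ^ 3 + t * γ ^ 3 = 1 / 3 ∧ β ^ 3 + δ ^ 3 = 1 / 3 ∧ β ^ 3 + (t + 1) * ε ^ 3 = 1 / 3 := by
  exact bowtie_color_class_identities_general hρ.ne' h1 h2 h3 h4 h5 hnorm
end
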